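/- arXiv:1804.08068 — 2 statements merged into one kernel-verified Lean document; each statement's English description precedes it below -/
import Mathlib

section
/- Let K be an algebraic number field with ring of integers O_K. Then there exists a real number B_K > 1 such that for every real x > 1 there is a nonzero prime ideal 𝔭 of O_K whose absolute norm N(𝔭) satisfies x ≤ N(𝔭) ≤ B_K·x. -/
namespace BertrandNF

open NumberField Module

variable {K : Type*} [Field K] [NumberField K] {ι : Type*} [Fintype ι] [DecidableEq ι]

/-- box of integer vectors -/
noncomputable def bx (ι : Type*) [Fintype ι] [DecidableEq ι] (a c : ℤ) : Finset (ι → ℤ) :=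
  Fintype.piFinset fun _ => Finset.Ioc a c

lemma mem_bx {a c : ℤ} {v : ι → ℤ} : v ∈ bx ι a c ↔ ∀ i, a < v i ∧ v i ≤ c := by
  simp [bx, Fintype.mem_piFinset]

lemma card_bx (a c : ℤ) : (bx ι a c).card = (c - a).toNat ^ Fintype.card ι := by
  simp [bx]

open Classical in
/-- number of box points in an ideal -/
noncomputable def cnt (b : Basis ι ℤ (𝓞 K)) (I : Ideal (𝓞 K)) (M : ℕ) : ℕ :=
  ((bx ι 0 M).filter (fun c => b.equivFun.symm c ∈ I)).card

lemma exists_small (b : Basis ι ℤ (𝓞 K)) (I : Ideal (𝓞 K)) (hI : I ≠ ⊥) (m : ℕ)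
    (hm : Ideal.absNorm I < m ^ Fintype.card ι) :
    ∃ g : 𝓞 K, g ∈ I ∧ g ≠ 0 ∧ ∀ i, |b.equivFun g i| ≤ m := by
  classical
  have : Finite (𝓞 K ⧸ I) := Ideal.finiteQuotientOfFreeOfNeBot I hI
  have := Fintype.ofFinite (𝓞 K ⧸ I)
  have hc : (Finset.univ : Finset (𝓞 K ⧸ I)).card < (bx ι 0 (m : ℤ)).card := by
    rw [card_bx, Finset.card_univ, ← Nat.card_eq_fintype_card]
    simpa [Ideal.absNorm_apply, Submodule.cardQuot_apply] using hm
  obtain ⟨x, hx, y, hy, hxy, h⟩ := Finset.exists_ne_map_eq_of_card_lt_of_maps_to hc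
    (f := fun c => Ideal.Quotient.mk I (b.equivFun.symm c)) (fun _ _ => Finset.mem_univ _)
  refine ⟨b.equivFun.symm x - b.equivFun.symm y, (Ideal.Quotient.eq).1 h, ?_, ?_⟩
  · rw [sub_ne_zero]
    exact fun h => hxy (b.equivFun.symm.injective h)
  · intro i
    rw [mem_bx] at hx hy
    have h1 := hx i
    have h2 := hy i
    rw [map_sub, LinearEquiv.apply_symm_apply, LinearEquiv.apply_symm_apply, Pi.sub_apply, abs_le]
    constructor <;> linarith

lemma small_reps (b : Basis ι ℤ (𝓞 K)) :
    ∃ C : ℕ, 0 < C ∧ ∀ (I : Ideal (𝓞 K)) (m : ℕ), I ≠ ⊥ →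
      Ideal.absNorm I < m ^ Fintype.card ι → ∀ x : 𝓞 K ⧸ I, ∃ r : 𝓞 K,
        Ideal.Quotient.mk I r = x ∧ ∀ i, |b.equivFun r i| ≤ C * m := by
  set E : ι → ι → ι → ℤ := fun l i k => |b.equivFun (b l * b i) k| with hE
  set C : ℕ := 1 + (∑ k, ∑ i, ∑ l, E l i k).toNat with hC
  have hE0 : ∀ l i k, 0 ≤ E l i k := fun l i k => abs_nonneg _
  have hCk : ∀ k, ∑ i, ∑ l, E l i k ≤ C := by
    intro k
    have h1 : ∑ i, ∑ l, E l i k ≤ ∑ k, ∑ i, ∑ l, E l i k :=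
      Finset.single_le_sum (f := fun k => ∑ i, ∑ l, E l i k)
        (fun k _ => Finset.sum_nonneg fun i _ => Finset.sum_nonneg fun l _ => hE0 l i k)
        (Finset.mem_univ k)
    have := Int.self_le_toNat (∑ k, ∑ i, ∑ l, E l i k)
    rw [hC]; push_cast; linarith
  refine ⟨C, by omega, ?_⟩
  intro I m hI hm x
  obtain ⟨β, rfl⟩ := Ideal.Quotient.mk_surjective x
  obtain ⟨g, hgI, hg0, hg⟩ := exists_small b I hI m hm
  set N : ℤ := (Ideal.absNorm (Ideal.span {g}) : ℤ) with hN
  have hNpos : 0 < N := by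
    rw [hN]
    have : Ideal.absNorm (Ideal.span {g}) ≠ 0 := by
      rw [Ne, Ideal.absNorm_eq_zero_iff]; simpa using hg0
    exact_mod_cast Nat.pos_of_ne_zero this
  have hmem : ((Ideal.absNorm (Ideal.span {g}) : ℕ) : 𝓞 K) ∈ Ideal.span {g} := Ideal.absNorm_mem _
  obtain ⟨g', hg'⟩ := Ideal.mem_span_singleton'.1 hmem
  have hNg : (N : 𝓞 K) = g' * g := by rw [hg']; simp [hN]
  -- s = coordinates of β * g'
  set s := b.equivFun (β * g') with hs
  have hsum : β * g' = ∑ i, s i • b i := (b.sum_equivFun (β * g')).symm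
  set q : 𝓞 K := ∑ i, (s i / N) • b i with hq
  have key : (N : 𝓞 K) * (β - g * q) = ∑ i, (s i % N) • (g * b i) := by
    have : (N : 𝓞 K) * (β - g * q) = g * (β * g' - N * q) := by
      rw [hNg]; ring
    rw [this, hsum, hq, Finset.mul_sum, ← Finset.sum_sub_distrib, Finset.mul_sum]
    refine Finset.sum_congr rfl fun i _ => ?_
    have h := Int.emod_add_mul_ediv (s i) N
    have h' : (s i : 𝓞 K) = ((s i % N : ℤ) : 𝓞 K) + N * ((s i / N : ℤ) : 𝓞 K) := by
      exact_mod_cast congrArg (Int.cast (R := 𝓞 K)) h.symm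
    simp only [zsmul_eq_mul]
    rw [h']; push_cast; ring
  refine ⟨β - g * q, ?_, ?_⟩
  · rw [Ideal.Quotient.eq]
    simpa using I.neg_mem (I.mul_mem_right q hgI)
  · intro k
    have hcoord : ∀ i, |b.equivFun (g * b i) k| ≤ m * ∑ l, E l i k := by
      intro i
      have : g * b i = ∑ l, (b.equivFun g l) • (b l * b i) := by
        conv_lhs => rw [← b.sum_equivFun g]
        rw [Finset.sum_mul]; simp [mul_assoc]
      rw [this, map_sum, Finset.sum_apply, Finset.mul_sum]
      refine (Finset.abs_sum_le_sum_abs _ _).trans (Finset.sum_le_sum fun l _ => ?_)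
      rw [map_smul, Pi.smul_apply, smul_eq_mul, abs_mul]
      exact mul_le_mul_of_nonneg_right (hg l) (abs_nonneg _)
    have h1 : N * b.equivFun (β - g * q) k = ∑ i, (s i % N) * b.equivFun (g * b i) k := by
      have := congrArg (fun z => b.equivFun z k) key
      simp only [map_sum, map_smul, Finset.sum_apply, Pi.smul_apply, smul_eq_mul] at this
      rw [← this, ← zsmul_eq_mul, map_smul, Pi.smul_apply, smul_eq_mul]
    have h2 : N * |b.equivFun (β - g * q) k| ≤ N * (C * m) := by
      calc N * |b.equivFun (β - g * q) k| = |N * b.equivFun (β - g * q) k| := by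
            rw [abs_mul, abs_of_pos hNpos]
        _ ≤ ∑ i, |(s i % N) * b.equivFun (g * b i) k| := by
            rw [h1]; exact Finset.abs_sum_le_sum_abs _ _
        _ ≤ ∑ i, N * (m * ∑ l, E l i k) := by
            refine Finset.sum_le_sum fun i _ => ?_
            rw [abs_mul]
            refine mul_le_mul ?_ (hcoord i) (abs_nonneg _) hNpos.le
            rw [abs_of_nonneg (Int.emod_nonneg _ hNpos.ne')]
            exact (Int.emod_lt_of_pos _ hNpos).le
        _ = N * ((∑ i, ∑ l, E l i k) * m) := by
            rw [← Finset.mul_sum, ← Finset.mul_sum]; ring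
        _ ≤ N * (C * m) := by
            have := hCk k
            gcongr
    exact le_of_mul_le_mul_left h2 hNpos

lemma count_upper (b : Basis ι ℤ (𝓞 K)) (I : Ideal (𝓞 K)) (hI : I ≠ ⊥) (D M : ℕ)
    (h : ∀ x : 𝓞 K ⧸ I, ∃ r : 𝓞 K,
        Ideal.Quotient.mk I r = x ∧ ∀ i, |b.equivFun r i| ≤ D) :
    Ideal.absNorm I * cnt b I M ≤ (M + 2 * D) ^ Fintype.card ι := by
  classical
  have : Finite (𝓞 K ⧸ I) := Ideal.finiteQuotientOfFreeOfNeBot I hI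
  have := Fintype.ofFinite (𝓞 K ⧸ I)
  choose r hr hrD using h
  have hN : Ideal.absNorm I = (Finset.univ : Finset (𝓞 K ⧸ I)).card := by
    rw [Finset.card_univ, ← Nat.card_eq_fintype_card, Ideal.absNorm_apply, Submodule.cardQuot_apply]
  have hB : (bx ι (-D : ℤ) (M + D)).card = (M + 2 * D) ^ Fintype.card ι := by
    rw [card_bx]; congr 1; omega
  rw [hN, cnt, ← Finset.card_product, ← hB]
  refine Finset.card_le_card_of_injOn (fun p => p.2 + b.equivFun (r p.1)) ?_ ?_
  · rintro ⟨x, c⟩ hp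
    simp only [Finset.coe_product, Set.mem_prod, Finset.mem_coe, Finset.mem_filter, mem_bx] at hp ⊢
    intro i
    have h1 := hp.2.1 i
    have h2 := abs_le.1 (hrD x i)
    simp only [Pi.add_apply]
    constructor <;> linarith
  · rintro ⟨x, c⟩ hp ⟨y, d⟩ hq hpq
    simp only [Finset.coe_product, Set.mem_prod, Finset.mem_coe, Finset.mem_filter] at hp hq
    have h1 := congrArg b.equivFun.symm hpq
    simp only [map_add, LinearEquiv.symm_apply_apply] at h1
    have h2 := congrArg (Ideal.Quotient.mk I) h1
    rw [map_add, map_add, Ideal.Quotient.eq_zero_iff_mem.2 hp.2.2,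
      Ideal.Quotient.eq_zero_iff_mem.2 hq.2.2, hr, hr, zero_add, zero_add] at h2
    subst h2
    simp only [add_left_inj] at hpq
    rw [hpq]

lemma count_lower (b : Basis ι ℤ (𝓞 K)) (I : Ideal (𝓞 K)) (hI : I ≠ ⊥) (D M : ℕ)
    (h : ∀ x : 𝓞 K ⧸ I, ∃ r : 𝓞 K,
        Ideal.Quotient.mk I r = x ∧ ∀ i, |b.equivFun r i| ≤ D) :
    (M - 2 * D) ^ Fintype.card ι ≤ Ideal.absNorm I * cnt b I M := by
  classical
  have : Finite (𝓞 K ⧸ I) := Ideal.finiteQuotientOfFreeOfNeBot I hI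
  have := Fintype.ofFinite (𝓞 K ⧸ I)
  choose r hr hrD using h
  have hN : Ideal.absNorm I = (Finset.univ : Finset (𝓞 K ⧸ I)).card := by
    rw [Finset.card_univ, ← Nat.card_eq_fintype_card, Ideal.absNorm_apply, Submodule.cardQuot_apply]
  have hB : (bx ι (D : ℤ) (M - D)).card = (M - 2 * D) ^ Fintype.card ι := by
    rw [card_bx]; congr 1; omega
  rw [hN, cnt, ← Finset.card_product, ← hB]
  refine Finset.card_le_card_of_injOn (fun c => (Ideal.Quotient.mk I (b.equivFun.symm c),
    c - b.equivFun (r (Ideal.Quotient.mk I (b.equivFun.symm c))))) ?_ ?_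
  · intro c hc
    simp only [Finset.coe_product, Set.mem_prod, Finset.mem_coe, Finset.mem_filter, mem_bx,
      Finset.mem_univ, true_and] at hc ⊢
    constructor
    · intro i
      have h1 := hc i
      have h2 := abs_le.1 (hrD (Ideal.Quotient.mk I (b.equivFun.symm c)) i)
      simp only [Pi.sub_apply]
      constructor <;> linarith
    · rw [map_sub, LinearEquiv.symm_apply_apply, ← Ideal.Quotient.eq, hr]
  · intro c hc d hd hcd
    simp only [Prod.mk.injEq] at hcd
    obtain ⟨h1, h2⟩ := hcd
    rw [h1] at h2
    exact sub_left_injective h2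


lemma pow_sub_bound (z y : ℝ) (hy : 0 ≤ y) (hyz : y ≤ z) (n : ℕ) :
    z ^ n ≤ (z - y) ^ n + n * y * z ^ (n - 1) := by
  have hz : 0 ≤ z := hy.trans hyz
  induction n with
  | zero => simp
  | succ n ih =>
    rcases Nat.eq_zero_or_pos n with rfl | hn
    · simp
    have e : z ^ n = z * z ^ (n - 1) := by
      rw [← pow_succ']; congr 1; omega
    have h1 : (z - y) ^ n ≤ z ^ n := pow_le_pow_left₀ (by linarith) (by linarith) n
    have h2 : z ^ (n + 1) ≤ z * (z - y) ^ n + n * y * z ^ n := by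
      calc z ^ (n + 1) = z * z ^ n := pow_succ' _ _
        _ ≤ z * ((z - y) ^ n + n * y * z ^ (n - 1)) := mul_le_mul_of_nonneg_left ih hz
        _ = z * (z - y) ^ n + n * y * z ^ n := by rw [e]; ring
    simp only [Nat.add_sub_cancel]
    push_cast
    nlinarith [mul_le_mul_of_nonneg_left h1 hy, pow_succ' (z - y) n]

lemma count_bounds (b : Basis ι ℤ (𝓞 K)) [Nonempty ι] (c : ℕ) :
    ∃ C₁ : ℝ, 0 < C₁ ∧ ∀ (I : Ideal (𝓞 K)) (J j : ℕ), I ≠ ⊥ →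
      Ideal.absNorm I < (2 ^ Fintype.card ι) ^ (j + 1) →
      ((2 ^ J : ℝ) ^ Fintype.card ι - C₁ * 2 ^ j * (2 ^ J) ^ (Fintype.card ι - 1)
        ≤ Ideal.absNorm I * cnt b I (2 ^ J)) ∧
      (j ≤ J + c → (Ideal.absNorm I * cnt b I (2 ^ J) : ℝ) ≤
        (2 ^ J : ℝ) ^ Fintype.card ι + C₁ * 2 ^ j * (2 ^ J) ^ (Fintype.card ι - 1)) := by
  obtain ⟨C, hC0, hC⟩ := small_reps b
  set n := Fintype.card ι with hn
  have hn1 : 1 ≤ n := Fintype.card_pos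
  have hC1 : (1 : ℝ) ≤ C := by exact_mod_cast hC0
  have hn1' : (1 : ℝ) ≤ n := by exact_mod_cast hn1
  set A : ℝ := 1 + 4 * C * 2 ^ c with hA
  have hA1 : 1 ≤ A := by rw [hA]; have : 0 ≤ 4 * (C : ℝ) * 2 ^ c := by positivity
                         linarith
  have hAp : 1 ≤ A ^ (n - 1) := one_le_pow₀ hA1
  refine ⟨n * (4 * C) * A ^ (n - 1), by positivity, ?_⟩
  intro I J j hI hNI
  have hNI' : Ideal.absNorm I < (2 ^ (j + 1)) ^ Fintype.card ι := by
    rw [← hn, ← pow_mul, mul_comm, pow_mul]; exact hNI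
  have hrep := hC I (2 ^ (j + 1)) hI hNI'
  set D : ℕ := C * 2 ^ (j + 1) with hD
  have hrep' : ∀ x : 𝓞 K ⧸ I, ∃ r : 𝓞 K,
        Ideal.Quotient.mk I r = x ∧ ∀ i, |b.equivFun r i| ≤ D := by
    simpa [hD] using hrep
  have hup := count_upper b I hI D (2 ^ J) hrep'
  have hlo := count_lower b I hI D (2 ^ J) hrep'
  set M : ℝ := 2 ^ J with hM
  have hMpos : 0 < M := by positivity
  have hDr : 2 * (D : ℝ) = 4 * C * 2 ^ j := by rw [hD]; push_cast; ring
  have hMM : M ^ n = M * M ^ (n - 1) := by rw [← pow_succ']; congr 1; omega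
  constructor
  · by_cases hcase : 2 * D ≤ 2 ^ J
    · have h1 : (M - 2 * D) ^ n ≤ Ideal.absNorm I * cnt b I (2 ^ J) := by
        have : (((2 ^ J - 2 * D : ℕ) : ℝ)) ^ n ≤ Ideal.absNorm I * cnt b I (2 ^ J) := by
          exact_mod_cast hlo
        rw [Nat.cast_sub hcase] at this
        simpa [hM] using this
      have hcr : 2 * (D : ℝ) ≤ M := by rw [hM]; exact_mod_cast hcase
      have h2 := pow_sub_bound M (2 * D) (by positivity) hcr n
      have h3 : n * (2 * D) * M ^ (n - 1) ≤ n * (4 * C) * A ^ (n - 1) * 2 ^ j * M ^ (n - 1) := by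
        rw [hDr]
        have : (n : ℝ) * (4 * C * 2 ^ j) * 1 ≤ n * (4 * C * 2 ^ j) * A ^ (n - 1) := by gcongr
        calc _ = ((n : ℝ) * (4 * C * 2 ^ j) * 1) * M ^ (n - 1) := by ring
          _ ≤ (n * (4 * C * 2 ^ j) * A ^ (n - 1)) * M ^ (n - 1) := by gcongr
          _ = _ := by ring
      linarith
    · have hcr : M ≤ 4 * C * 2 ^ j := by
        rw [← hDr, hM]; push Not at hcase; exact_mod_cast hcase.le
      have h3 : M ^ n ≤ n * (4 * C) * A ^ (n - 1) * 2 ^ j * M ^ (n - 1) := by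
        rw [hMM]
        have : 1 * (4 * C * 2 ^ j) * 1 ≤ (n : ℝ) * (4 * C * 2 ^ j) * A ^ (n - 1) := by gcongr
        calc M * M ^ (n - 1) ≤ (1 * (4 * C * 2 ^ j) * 1) * M ^ (n - 1) := by
              gcongr; linarith
          _ ≤ (n * (4 * C * 2 ^ j) * A ^ (n - 1)) * M ^ (n - 1) := by gcongr
          _ = _ := by ring
      have : (0 : ℝ) ≤ Ideal.absNorm I * cnt b I (2 ^ J) := by positivity
      linarith
  · intro hj
    have h1 : (Ideal.absNorm I * cnt b I (2 ^ J) : ℝ) ≤ (M + 2 * D) ^ n := by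
      rw [hM]; exact_mod_cast hup
    have h2 := pow_sub_bound (M + 2 * D) (2 * D) (by positivity) (by linarith) n
    rw [add_sub_cancel_right] at h2
    have h3 : M + 2 * D ≤ A * M := by
      rw [hDr, hA]
      have : (2 : ℝ) ^ j ≤ 2 ^ c * M := by
        rw [hM, ← pow_add]; exact pow_le_pow_right₀ (by norm_num) (by omega)
      nlinarith
    have h4 : (n : ℝ) * (2 * D) * (M + 2 * D) ^ (n - 1) ≤
        n * (4 * C) * A ^ (n - 1) * 2 ^ j * M ^ (n - 1) := by
      calc (n : ℝ) * (2 * D) * (M + 2 * D) ^ (n - 1) ≤ n * (2 * D) * (A * M) ^ (n - 1) := by gcongr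
        _ = _ := by rw [hDr, mul_pow]; ring
    linarith

/-! primes -/

lemma finite_primes (Y : ℕ) :
    {p : Ideal (𝓞 K) | p.IsPrime ∧ p ≠ ⊥ ∧ Ideal.absNorm p ≤ Y}.Finite := by
  refine (Ideal.finite_setOfPred_absNorm_le (S := 𝓞 K) Y).subset ?_
  rintro p ⟨_, _, h⟩
  exact h

/-- nonzero primes of norm at most Y -/
noncomputable def Pr (K : Type*) [Field K] [NumberField K] (Y : ℕ) : Finset (Ideal (𝓞 K)) :=
  (finite_primes (K := K) Y).toFinset

lemma mem_Pr {Y : ℕ} {p : Ideal (𝓞 K)} :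
    p ∈ Pr K Y ↔ p.IsPrime ∧ p ≠ ⊥ ∧ Ideal.absNorm p ≤ Y := by
  simp [Pr]

lemma Pr_mono {Y Z : ℕ} (h : Y ≤ Z) : Pr K Y ⊆ Pr K Z := by
  intro p hp
  rw [mem_Pr] at *
  exact ⟨hp.1, hp.2.1, hp.2.2.trans h⟩

lemma two_le_norm {p : Ideal (𝓞 K)} (hp : p.IsPrime) (h0 : p ≠ ⊥) : 2 ≤ Ideal.absNorm p := by
  have h1 : Ideal.absNorm p ≠ 0 := by rwa [Ne, Ideal.absNorm_eq_zero_iff]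
  have h2 : Ideal.absNorm p ≠ 1 := by rw [Ne, Ideal.absNorm_eq_one_iff]; exact hp.ne_top
  omega

lemma theta_bound (Y : ℕ) :
    ∑ p ∈ Pr K Y, Real.log (Ideal.absNorm p) ≤ (Module.finrank ℚ K * Real.log 4) * Y := by
  have hdvd : ∏ p ∈ Pr K Y, p ∣ Ideal.span {((primorial Y : ℕ) : 𝓞 K)} := by
    refine Finset.prod_primes_dvd _ (fun p hp => ?_) (fun p hp => ?_)
    · rw [mem_Pr] at hp
      exact Ideal.prime_of_isPrime hp.2.1 hp.1
    · rw [mem_Pr] at hp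
      obtain ⟨hp, h0, hY⟩ := hp
      rw [Ideal.dvd_span_singleton]
      have hmem : ((Ideal.absNorm p : ℕ) : 𝓞 K) ∈ p := Ideal.absNorm_mem p
      have h2 := two_le_norm hp h0
      -- some prime factor q of the norm lies in p
      have hq : ∃ q : ℕ, q.Prime ∧ q ≤ Y ∧ ((q : ℕ) : 𝓞 K) ∈ p := by
        have hprod := Nat.prod_primeFactorsList (n := Ideal.absNorm p) (by omega)
        rw [← hprod, Nat.cast_list_prod] at hmem
        rw [← Multiset.prod_coe, hp.multiset_prod_mem_iff_exists_mem] at hmem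
        obtain ⟨x, hx, hxp⟩ := hmem
        obtain ⟨q, hq, rfl⟩ := List.mem_map.1 (Multiset.mem_coe.1 hx)
        refine ⟨q, Nat.prime_of_mem_primeFactorsList hq, ?_, hxp⟩
        exact (Nat.le_of_dvd (by omega) (Nat.dvd_of_mem_primeFactorsList hq)).trans hY
      obtain ⟨q, hqp, hqY, hqm⟩ := hq
      have : q ∣ primorial Y := (Nat.Prime.dvd_primorial_iff hqp).2 hqY
      obtain ⟨t, ht⟩ := this
      rw [ht, Nat.cast_mul]
      exact p.mul_mem_right _ hqm
  have h1 := map_dvd Ideal.absNorm hdvd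
  have hn : Ideal.absNorm (Ideal.span {((primorial Y : ℕ) : 𝓞 K)}) =
      primorial Y ^ Module.finrank ℚ K := by
    rw [Ideal.absNorm_span_singleton]
    have : ((primorial Y : ℕ) : 𝓞 K) = algebraMap ℤ (𝓞 K) (primorial Y : ℤ) := by simp
    rw [this, Algebra.norm_algebraMap, RingOfIntegers.rank]
    simp
  rw [hn, map_prod] at h1
  have hpos := primorial_pos Y
  have h2 := Nat.le_of_dvd (by positivity) h1
  have h3 : ∏ p ∈ Pr K Y, Ideal.absNorm p ≤ (4 ^ Y) ^ Module.finrank ℚ K :=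
    h2.trans (Nat.pow_le_pow_left (primorial_le_four_pow Y) _)
  have hne : ∀ p ∈ Pr K Y, (Ideal.absNorm p : ℝ) ≠ 0 := by
    intro p hp
    rw [mem_Pr] at hp
    have := two_le_norm hp.1 hp.2.1
    have : Ideal.absNorm p ≠ 0 := by omega
    exact_mod_cast this
  rw [← Real.log_prod hne]
  have h4 : ∏ p ∈ Pr K Y, (Ideal.absNorm p : ℝ) ≤ (4 ^ Y) ^ Module.finrank ℚ K := by
    exact_mod_cast h3
  refine (Real.log_le_log (Finset.prod_pos fun p hp =>
    lt_of_le_of_ne (by positivity) (hne p hp).symm) h4).trans (le_of_eq ?_)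
  rw [Real.log_pow, Real.log_pow]; ring

lemma log_norm_nonneg (p : Ideal (𝓞 K)) : 0 ≤ Real.log (Ideal.absNorm p) :=
  Real.log_natCast_nonneg _

/-- dyadic summation -/
lemma dyadic (Q : ℕ) (hQ : 2 ≤ Q) (g : ℕ → ℝ) (hg : ∀ j, 0 ≤ g j) (Y L : ℕ) (hY : Y < Q ^ L) :
    ∑ p ∈ Pr K Y, Real.log (Ideal.absNorm p) * g (Nat.log Q (Ideal.absNorm p)) ≤
      ∑ j ∈ Finset.range L, (Module.finrank ℚ K * Real.log 4) * Q ^ (j + 1) * g j := by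
  classical
  rw [← Finset.sum_fiberwise_of_maps_to (s := Pr K Y) (t := Finset.range L)
    (g := fun p => Nat.log Q (Ideal.absNorm p))]
  · refine Finset.sum_le_sum fun j _ => ?_
    have h1 : ∑ p ∈ Pr K Y with Nat.log Q (Ideal.absNorm p) = j,
        Real.log (Ideal.absNorm p) * g (Nat.log Q (Ideal.absNorm p)) =
        (∑ p ∈ Pr K Y with Nat.log Q (Ideal.absNorm p) = j, Real.log (Ideal.absNorm p)) * g j := by
      rw [Finset.sum_mul]
      refine Finset.sum_congr rfl fun p hp => ?_
      rw [(Finset.mem_filter.1 hp).2]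
    rw [h1]
    refine mul_le_mul_of_nonneg_right ?_ (hg j)
    have h2 := theta_bound (K := K) (Q ^ (j + 1))
    push_cast at h2
    refine le_trans (Finset.sum_le_sum_of_subset_of_nonneg ?_ fun p _ _ => log_norm_nonneg p) h2
    intro p hp
    rw [Finset.mem_filter, mem_Pr] at hp
    rw [mem_Pr]
    refine ⟨hp.1.1, hp.1.2.1, ?_⟩
    rw [← hp.2]
    exact (Nat.lt_pow_succ_log_self (by omega) _).le
  · intro p hp
    rw [mem_Pr] at hp
    rw [Finset.mem_range]
    have := two_le_norm hp.1 hp.2.1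
    exact Nat.log_lt_of_lt_pow (by omega) (lt_of_le_of_lt hp.2.2 hY)

lemma log_norm_eq (I : Ideal (𝓞 K)) (hI : I ≠ ⊥) (Y L : ℕ) (hY : Ideal.absNorm I ≤ Y)
    (hL : Ideal.absNorm I < 2 ^ L) [∀ p : Ideal (𝓞 K), ∀ k : ℕ, Decidable (I ≤ p ^ k)] :
    Real.log (Ideal.absNorm I) = ∑ p ∈ Pr K Y, ∑ k ∈ Finset.Icc 1 L,
      if I ≤ p ^ k then Real.log (Ideal.absNorm p) else 0 := by
  classical
  have hI0 : Ideal.absNorm I ≠ 0 := by rwa [Ne, Ideal.absNorm_eq_zero_iff]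
  set s := UniqueFactorizationMonoid.normalizedFactors I with hs
  have hsI : s.prod = I := by
    exact associated_iff_eq.1 (UniqueFactorizationMonoid.prod_normalizedFactors hI)
  have hle : ∀ J : Ideal (𝓞 K), J ∣ I → Ideal.absNorm J ≤ Ideal.absNorm I := fun J hJ =>
    Nat.le_of_dvd (Nat.pos_of_ne_zero hI0) (map_dvd Ideal.absNorm hJ)
  have hsub : s.toFinset ⊆ Pr K Y := by
    intro p hp
    rw [Multiset.mem_toFinset] at hp
    have hpp := UniqueFactorizationMonoid.prime_of_normalized_factor p hp
    have hd := UniqueFactorizationMonoid.dvd_of_mem_normalizedFactors hp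
    rw [mem_Pr]
    exact ⟨Ideal.isPrime_of_prime hpp, hpp.ne_zero, (hle p hd).trans hY⟩
  have hprod : (Ideal.absNorm I : ℝ) = ∏ p ∈ Pr K Y, (Ideal.absNorm p : ℝ) ^ (s.count p) := by
    have h1 : Ideal.absNorm I = ∏ p ∈ s.toFinset, (Ideal.absNorm p) ^ (s.count p) := by
      rw [← Finset.prod_multiset_map_count, ← map_multiset_prod, hsI]
    have h2 : Ideal.absNorm I = ∏ p ∈ Pr K Y, (Ideal.absNorm p) ^ (s.count p) := by
      rw [h1]
      refine Finset.prod_subset hsub fun p _ hp => ?_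
      rw [Multiset.mem_toFinset] at hp
      rw [Multiset.count_eq_zero_of_notMem hp, pow_zero]
    exact_mod_cast h2
  have hne : ∀ p ∈ Pr K Y, (Ideal.absNorm p : ℝ) ^ (s.count p) ≠ 0 := by
    intro p hp
    rw [mem_Pr] at hp
    have := two_le_norm hp.1 hp.2.1
    have : Ideal.absNorm p ≠ 0 := by omega
    exact pow_ne_zero _ (by exact_mod_cast this)
  rw [hprod, Real.log_prod hne]
  refine Finset.sum_congr rfl fun p hp => ?_
  rw [Real.log_pow, ← Finset.sum_filter, Finset.sum_const, nsmul_eq_mul]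
  congr 2
  rw [mem_Pr] at hp
  have hpp : Prime p := Ideal.prime_of_isPrime hp.2.1 hp.1
  have hk : ∀ k : ℕ, I ≤ p ^ k ↔ k ≤ s.count p := by
    intro k
    rw [← Ideal.dvd_iff_le, pow_dvd_iff_le_emultiplicity,
      UniqueFactorizationMonoid.emultiplicity_eq_count_normalizedFactors hpp.irreducible hI,
      normalize_eq, Nat.cast_le]
  have hcL : s.count p ≤ L := by
    have h1 : p ^ (s.count p) ∣ I := Ideal.dvd_iff_le.2 ((hk _).2 le_rfl)
    have h2 := hle _ h1
    rw [map_pow] at h2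
    have h3 : 2 ^ (s.count p) ≤ Ideal.absNorm p ^ (s.count p) :=
      Nat.pow_le_pow_left (two_le_norm hp.1 hp.2.1) _
    exact ((Nat.pow_lt_pow_iff_right (a := 2) (by norm_num)).1
      (lt_of_le_of_lt (h3.trans h2) hL)).le
  have : Finset.filter (fun k => I ≤ p ^ k) (Finset.Icc 1 L) = Finset.Icc 1 (s.count p) := by
    ext k
    simp only [Finset.mem_filter, Finset.mem_Icc, hk]
    omega
  rw [this]; simp


lemma card_int_le (A : Finset ℤ) (k : ℕ) (h : ∀ x ∈ A, ∀ y ∈ A, x - y ≤ k) : A.card ≤ k + 1 := by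
  rcases A.eq_empty_or_nonempty with rfl | hA
  · simp
  have hsub : A ⊆ Finset.Icc (A.min' hA) (A.min' hA + k) := by
    intro x hx
    rw [Finset.mem_Icc]
    have := h x hx _ (A.min'_mem hA)
    exact ⟨A.min'_le x hx, by linarith⟩
  have := Finset.card_le_card hsub
  rw [Int.card_Icc] at this
  omega

lemma absNorm_eq_prod (α : 𝓞 K) :
    (Ideal.absNorm (Ideal.span {α}) : ℝ) = ∏ σ : K →ₐ[ℚ] ℂ, ‖σ (α : K)‖ := by
  rw [Ideal.absNorm_span_singleton, ← norm_prod, ← Algebra.norm_eq_prod_embeddings,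
    ← Algebra.coe_norm_int]
  simp

lemma card_emb (b : Basis ι ℤ (𝓞 K)) :
    (Finset.univ : Finset (K →ₐ[ℚ] ℂ)).card = Fintype.card ι := by
  rw [Finset.card_univ, AlgHom.card, ← RingOfIntegers.rank, Module.finrank_eq_card_basis b]

lemma el_coe (b : Basis ι ℤ (𝓞 K)) (σ : K →ₐ[ℚ] ℂ) (v : ι → ℤ) :
    σ ((b.equivFun.symm v : 𝓞 K) : K) = ∑ i, (v i : ℂ) * σ (b i : K) := by
  have h : ((b.equivFun.symm v : 𝓞 K) : K) = ∑ i, (v i : K) * (b i : K) := by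
    rw [Basis.equivFun_symm_apply]
    show algebraMap (𝓞 K) K _ = _
    rw [map_sum]
    refine Finset.sum_congr rfl fun i _ => ?_
    simp
  rw [h, map_sum]
  refine Finset.sum_congr rfl fun i _ => ?_
  simp

lemma norm_upper (b : Basis ι ℤ (𝓞 K)) :
    ∃ c : ℕ, ∀ (J : ℕ), ∀ v ∈ bx ι 0 ((2 ^ J : ℕ) : ℤ),
      Ideal.absNorm (Ideal.span {b.equivFun.symm v}) ≤ (2 ^ Fintype.card ι) ^ (J + c) := by
  obtain ⟨c, hc⟩ := pow_unbounded_of_one_lt (∑ σ : K →ₐ[ℚ] ℂ, ∑ i, ‖σ (b i : K)‖)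
    (one_lt_two : (1 : ℝ) < 2)
  refine ⟨c, fun J v hv => ?_⟩
  rw [mem_bx] at hv
  have h1 : ∀ σ : K →ₐ[ℚ] ℂ, ‖σ ((b.equivFun.symm v : 𝓞 K) : K)‖ ≤ 2 ^ (J + c) := by
    intro σ
    rw [el_coe]
    calc ‖∑ i, (v i : ℂ) * σ (b i : K)‖ ≤ ∑ i, 2 ^ J * ‖σ (b i : K)‖ := by
          refine (norm_sum_le _ _).trans (Finset.sum_le_sum fun i _ => ?_)
          rw [norm_mul]
          refine mul_le_mul_of_nonneg_right ?_ (norm_nonneg _)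
          rw [Complex.norm_intCast, abs_of_nonneg (by exact_mod_cast (hv i).1.le)]
          exact_mod_cast (hv i).2
      _ = 2 ^ J * ∑ i, ‖σ (b i : K)‖ := by rw [Finset.mul_sum]
      _ ≤ 2 ^ J * 2 ^ c := by
          refine mul_le_mul_of_nonneg_left (le_trans ?_ hc.le) (by positivity)
          exact Finset.single_le_sum (f := fun σ : K →ₐ[ℚ] ℂ => ∑ i, ‖σ (b i : K)‖)
            (fun σ _ => Finset.sum_nonneg fun i _ => norm_nonneg _) (Finset.mem_univ σ)
      _ = 2 ^ (J + c) := by rw [pow_add]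
  have h2 : (Ideal.absNorm (Ideal.span {b.equivFun.symm v}) : ℝ) ≤
      (2 ^ (J + c)) ^ Fintype.card ι := by
    rw [absNorm_eq_prod, ← card_emb b]
    rw [← Finset.prod_const]
    exact Finset.prod_le_prod (fun σ _ => norm_nonneg _) fun σ _ => h1 σ
  rw [← pow_mul, mul_comm, pow_mul]
  exact_mod_cast h2

open Classical in
lemma count_small (b : Basis ι ℤ (𝓞 K)) [Nonempty ι] (σ : K →ₐ[ℚ] ℂ) :
    ∃ C : ℝ, 0 < C ∧ ∀ (M : ℕ) (T : ℝ), 1 ≤ T →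
      (((bx ι 0 (M : ℤ)).filter fun v => ‖σ ((b.equivFun.symm v : 𝓞 K) : K)‖ < T).card : ℝ) ≤
        C * T * M ^ (Fintype.card ι - 1) := by
  obtain ⟨i₀⟩ := ‹Nonempty ι›
  set w : ℂ := σ (b i₀ : K) with hw
  have hw0 : 0 < ‖w‖ := by
    rw [norm_pos_iff, hw, Ne, map_eq_zero]
    simpa using b.ne_zero i₀
  refine ⟨2 / ‖w‖ + 1, by positivity, fun M T hT => ?_⟩
  set s := (bx ι 0 (M : ℤ)).filter fun v => ‖σ ((b.equivFun.symm v : 𝓞 K) : K)‖ < T with hs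
  set k : ℕ := ⌊2 * T / ‖w‖⌋₊ with hk
  have hmap : ∀ v ∈ s, (fun i : {i // i ≠ i₀} => v i) ∈ bx {i // i ≠ i₀} 0 (M : ℤ) := by
    intro v hv
    rw [hs, Finset.mem_filter, mem_bx] at hv
    rw [mem_bx]
    exact fun i => hv.1 i
  have hfib : ∀ y ∈ bx {i // i ≠ i₀} 0 (M : ℤ),
      (s.filter fun v => (fun i : {i // i ≠ i₀} => v i) = y).card ≤ k + 1 := by
    intro y _
    set F := s.filter fun v => (fun i : {i // i ≠ i₀} => v i) = y with hF
    have hinj : Set.InjOn (fun v : ι → ℤ => v i₀) F := by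
      intro v hv u hu hvu
      rw [Finset.mem_coe, hF, Finset.mem_filter] at hv hu
      funext i
      by_cases hi : i = i₀
      · rw [hi]; exact hvu
      · have := congrFun (hv.2.trans hu.2.symm) ⟨i, hi⟩
        exact this
    rw [← Finset.card_image_of_injOn hinj]
    apply card_int_le
    intro x hx z hz
    obtain ⟨v, hv, rfl⟩ := Finset.mem_image.1 hx
    obtain ⟨u, hu, rfl⟩ := Finset.mem_image.1 hz
    rw [hF, Finset.mem_filter, hs, Finset.mem_filter] at hv hu
    have hd : σ ((b.equivFun.symm v : 𝓞 K) : K) - σ ((b.equivFun.symm u : 𝓞 K) : K) =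
        ((v i₀ - u i₀ : ℤ) : ℂ) * w := by
      rw [el_coe, el_coe, ← Finset.sum_sub_distrib, Finset.sum_eq_single i₀]
      · push_cast; ring
      · intro i _ hi
        have : v i = u i := congrFun (hv.2.trans hu.2.symm) ⟨i, hi⟩
        rw [this]; ring
      · simp
    have hn : ‖((v i₀ - u i₀ : ℤ) : ℂ) * w‖ ≤ 2 * T := by
      rw [← hd]
      refine (norm_sub_le _ _).trans ?_
      linarith [hv.1.2, hu.1.2]
    rw [norm_mul, Complex.norm_intCast, ← le_div_iff₀ hw0] at hn
    have h3 : (((v i₀ - u i₀).natAbs : ℕ) : ℝ) ≤ 2 * T / ‖w‖ := by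
      rw [Nat.cast_natAbs]; exact_mod_cast hn
    have h4 := Nat.le_floor h3
    rw [← hk] at h4
    show v i₀ - u i₀ ≤ k
    omega
  have h := Finset.card_le_mul_card_image_of_maps_to hmap (k + 1) hfib
  rw [card_bx] at h
  have hcard : Fintype.card {i // i ≠ i₀} = Fintype.card ι - 1 := by
    simp
  rw [hcard] at h
  have h5 : ((k + 1 : ℕ) : ℝ) ≤ (2 / ‖w‖ + 1) * T := by
    have : (k : ℝ) ≤ 2 * T / ‖w‖ := Nat.floor_le (by positivity)
    push_cast
    calc (k : ℝ) + 1 ≤ 2 * T / ‖w‖ + T := by linarith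
      _ = _ := by ring
  have h6 : (s.card : ℝ) ≤ ((k + 1 : ℕ) : ℝ) * M ^ (Fintype.card ι - 1) := by
    have : s.card ≤ (k + 1) * M ^ (Fintype.card ι - 1) := by simpa using h
    exact_mod_cast this
  exact h6.trans (mul_le_mul_of_nonneg_right h5 (by positivity))

/-- pointwise estimate -/
lemma log_lower (y : ℝ) (hy : 1 ≤ y) (J : ℕ) :
    J * Real.log 2 - Real.log 2 * ∑ i ∈ Finset.range (J + 1), (if y < 2 ^ i then (1 : ℝ) else 0)
      ≤ Real.log y := by
  have hl : 0 < Real.log 2 := Real.log_pos one_lt_two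
  induction J with
  | zero =>
    have : 0 ≤ Real.log y := Real.log_nonneg hy
    rw [zero_add, Finset.sum_range_one]
    split_ifs
    · simp only [Nat.cast_zero]; linarith
    · simp only [Nat.cast_zero]; linarith
  | succ J ih =>
    rw [Finset.sum_range_succ]
    by_cases h : y < 2 ^ (J + 1)
    · rw [if_pos h]; push_cast; linarith
    · have h0 : ∀ i ∈ Finset.range (J + 1), (if y < 2 ^ i then (1 : ℝ) else 0) = 0 := by
        intro i hi
        rw [if_neg]
        push Not at h ⊢
        exact le_trans (pow_le_pow_right₀ (by norm_num) (Finset.mem_range.1 hi).le) h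
      rw [if_neg h, Finset.sum_eq_zero h0]
      push Not at h
      have := Real.log_le_log (by positivity) h
      rw [Real.log_pow] at this
      linarith

lemma el_ne_zero (b : Basis ι ℤ (𝓞 K)) [Nonempty ι] (M : ℕ) (v : ι → ℤ) (hv : v ∈ bx ι 0 (M : ℤ)) :
    b.equivFun.symm v ≠ 0 := by
  rw [mem_bx] at hv
  intro h
  have : v = 0 := (LinearEquiv.map_eq_zero_iff _).1 h
  have h1 := (hv (Classical.arbitrary ι)).1
  rw [this] at h1
  simp at h1

lemma sum_lower (b : Basis ι ℤ (𝓞 K)) [Nonempty ι] :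
    ∃ C : ℝ, 0 < C ∧ ∀ J : ℕ, (2 ^ J : ℝ) ^ Fintype.card ι *
        (Fintype.card ι * (J * Real.log 2) - C) ≤
      ∑ v ∈ bx ι 0 ((2 ^ J : ℕ) : ℤ), Real.log (Ideal.absNorm (Ideal.span {b.equivFun.symm v})) := by
  classical
  choose C hC0 hC using count_small b
  set n := Fintype.card ι with hn
  have hn1 : 1 ≤ n := Fintype.card_pos
  have hl : 0 < Real.log 2 := Real.log_pos one_lt_two
  have hCs : 0 ≤ ∑ σ, C σ := Finset.sum_nonneg fun σ _ => (hC0 σ).le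
  refine ⟨n * Real.log 2 * (2 * ∑ σ, C σ) + 1, by positivity, fun J => ?_⟩
  set M : ℝ := 2 ^ J with hM
  have hMpos : 0 < M := by positivity
  have hMM : M ^ n = M * M ^ (n - 1) := by rw [← pow_succ']; congr 1; omega
  let t : (K →ₐ[ℚ] ℂ) → (ι → ℤ) → ℝ := fun σ v => ∑ i ∈ Finset.range (J + 1),
    (if ‖σ ((b.equivFun.symm v : 𝓞 K) : K)‖ < 2 ^ i then (1 : ℝ) else 0)
  have ht0 : ∀ σ v, 0 ≤ t σ v := fun σ v => Finset.sum_nonneg fun i _ => by split_ifs <;> norm_num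
  have hpt : ∀ v ∈ bx ι 0 ((2 ^ J : ℕ) : ℤ), n * (J * Real.log 2) - n * Real.log 2 * ∑ σ, t σ v ≤
      Real.log (Ideal.absNorm (Ideal.span {b.equivFun.symm v})) := by
    intro v hv
    have hT0 : 0 ≤ ∑ σ, t σ v := Finset.sum_nonneg fun σ _ => ht0 σ v
    by_cases hgood : ∀ σ : K →ₐ[ℚ] ℂ, 1 ≤ ‖σ ((b.equivFun.symm v : 𝓞 K) : K)‖
    · rw [absNorm_eq_prod, Real.log_prod (fun σ _ => (lt_of_lt_of_le one_pos (hgood σ)).ne')]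
      have h1 : ∑ σ : K →ₐ[ℚ] ℂ, (J * Real.log 2 - Real.log 2 * t σ v) ≤
          ∑ σ : K →ₐ[ℚ] ℂ, Real.log ‖σ ((b.equivFun.symm v : 𝓞 K) : K)‖ :=
        Finset.sum_le_sum fun σ _ => log_lower _ (hgood σ) J
      rw [Finset.sum_sub_distrib, Finset.sum_const, card_emb b, nsmul_eq_mul, ← Finset.mul_sum] at h1
      have h2 : 1 * (Real.log 2 * ∑ σ, t σ v) ≤ n * (Real.log 2 * ∑ σ, t σ v) :=
        mul_le_mul_of_nonneg_right (by exact_mod_cast hn1) (by positivity)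
      linarith
    · push Not at hgood
      obtain ⟨σ, hσ⟩ := hgood
      have h1 : (J : ℝ) + 1 = t σ v := by
        have : ∀ i ∈ Finset.range (J + 1),
            (if ‖σ ((b.equivFun.symm v : 𝓞 K) : K)‖ < 2 ^ i then (1 : ℝ) else 0) = 1 := by
          intro i _
          rw [if_pos (lt_of_lt_of_le hσ (one_le_pow₀ (by norm_num)))]
        simp only [t]
        rw [Finset.sum_congr rfl this]; simp
      have h2 : t σ v ≤ ∑ σ, t σ v :=
        Finset.single_le_sum (f := fun σ => t σ v) (fun σ _ => ht0 σ v) (Finset.mem_univ σ)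
      have h3 : (0 : ℝ) ≤ Real.log (Ideal.absNorm (Ideal.span {b.equivFun.symm v})) :=
        Real.log_natCast_nonneg _
      have h4 : n * Real.log 2 * J ≤ n * Real.log 2 * ∑ σ, t σ v := by
        gcongr; linarith
      linarith
  have hsum := Finset.sum_le_sum hpt
  rw [Finset.sum_sub_distrib, Finset.sum_const, card_bx, nsmul_eq_mul, ← Finset.mul_sum] at hsum
  have hcard : ((((((2 ^ J : ℕ) : ℤ) - 0).toNat ^ n : ℕ)) : ℝ) = M ^ n := by
    rw [sub_zero, Int.toNat_natCast]; push_cast; rfl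
  rw [hcard] at hsum
  have hgeom : ∑ i ∈ Finset.range (J + 1), (2 : ℝ) ^ i ≤ 2 * M := by
    rw [geom_sum_eq (by norm_num), hM, pow_succ]; norm_num; linarith
  have hT : ∑ v ∈ bx ι 0 ((2 ^ J : ℕ) : ℤ), ∑ σ, t σ v ≤ (2 * ∑ σ, C σ) * M ^ n := by
    rw [Finset.sum_comm]
    have : ∀ σ : K →ₐ[ℚ] ℂ, ∑ v ∈ bx ι 0 ((2 ^ J : ℕ) : ℤ), t σ v ≤ C σ * (2 * M ^ n) := by
      intro σ
      simp only [t]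
      rw [Finset.sum_comm]
      calc _ ≤ ∑ i ∈ Finset.range (J + 1), C σ * 2 ^ i * M ^ (n - 1) := by
            refine Finset.sum_le_sum fun i _ => ?_
            rw [← Finset.sum_filter, Finset.sum_const, nsmul_eq_mul, mul_one]
            have := hC σ (2 ^ J) (2 ^ i) (one_le_pow₀ (by norm_num))
            have e : (((2 ^ J : ℕ)) : ℝ) = M := by rw [hM]; push_cast; rfl
            rw [e] at this
            exact this
        _ = C σ * M ^ (n - 1) * ∑ i ∈ Finset.range (J + 1), (2 : ℝ) ^ i := by
            rw [Finset.mul_sum]; exact Finset.sum_congr rfl fun i _ => by ring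
        _ ≤ C σ * M ^ (n - 1) * (2 * M) := by
            have := (hC0 σ).le
            gcongr
        _ = _ := by rw [hMM]; ring
    refine (Finset.sum_le_sum fun σ _ => this σ).trans (le_of_eq ?_)
    rw [← Finset.sum_mul]; ring
  have h5 : n * Real.log 2 * ∑ v ∈ bx ι 0 ((2 ^ J : ℕ) : ℤ), ∑ σ, t σ v ≤
      n * Real.log 2 * ((2 * ∑ σ, C σ) * M ^ n) := by gcongr
  have h6 : 0 < M ^ n := by positivity
  nlinarith


/-- Mertens sum -/
noncomputable def Asum (K : Type*) [Field K] [NumberField K] (Y : ℕ) : ℝ :=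
  ∑ p ∈ Pr K Y, Real.log (Ideal.absNorm p) / Ideal.absNorm p

lemma S_eq (b : Basis ι ℤ (𝓞 K)) [Nonempty ι] (M Y L : ℕ)
    (hY : ∀ v ∈ bx ι 0 (M : ℤ), Ideal.absNorm (Ideal.span {b.equivFun.symm v}) ≤ Y)
    (hL : Y < 2 ^ L) :
    ∑ v ∈ bx ι 0 (M : ℤ), Real.log (Ideal.absNorm (Ideal.span {b.equivFun.symm v})) =
      ∑ p ∈ Pr K Y, ∑ k ∈ Finset.Icc 1 L, Real.log (Ideal.absNorm p) * cnt b (p ^ k) M := by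
  classical
  have h1 : ∀ v ∈ bx ι 0 (M : ℤ), Real.log (Ideal.absNorm (Ideal.span {b.equivFun.symm v})) =
      ∑ p ∈ Pr K Y, ∑ k ∈ Finset.Icc 1 L,
        if b.equivFun.symm v ∈ p ^ k then Real.log (Ideal.absNorm p) else 0 := by
    intro v hv
    have h0 : Ideal.span {b.equivFun.symm v} ≠ ⊥ := by
      rw [Ne, Ideal.span_singleton_eq_bot]; exact el_ne_zero b M v hv
    rw [log_norm_eq _ h0 Y L (hY v hv) (lt_of_le_of_lt (hY v hv) hL)]
    simp only [Ideal.span_singleton_le_iff_mem]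
  rw [Finset.sum_congr rfl h1, Finset.sum_comm]
  refine Finset.sum_congr rfl fun p _ => ?_
  rw [Finset.sum_comm]
  refine Finset.sum_congr rfl fun k _ => ?_
  rw [← Finset.sum_filter, Finset.sum_const, nsmul_eq_mul, cnt, mul_comm]

lemma log_spec {Q : ℕ} (hQ : 2 ≤ Q) {N : ℕ} (hN : 2 ≤ N) :
    Q ^ Nat.log Q N ≤ N ∧ N < Q ^ (Nat.log Q N + 1) :=
  ⟨Nat.pow_log_le_self Q (by omega), Nat.lt_pow_succ_log_self (by omega) N⟩

lemma dyadic1 (n : ℕ) (hn : 1 ≤ n) (L : ℕ) :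
    ∑ p ∈ Pr K ((2 ^ n) ^ L), Real.log (Ideal.absNorm p) *
      ((2 : ℝ) ^ (Nat.log (2 ^ n) (Ideal.absNorm p)) /
        (2 ^ n) ^ (Nat.log (2 ^ n) (Ideal.absNorm p))) ≤
      2 * (Module.finrank ℚ K * Real.log 4) * 2 ^ n * 2 ^ L := by
  have hQ : 2 ≤ 2 ^ n := by simpa using Nat.pow_le_pow_right (n := 2) (by norm_num) hn
  refine (dyadic (K := K) (2 ^ n) hQ (fun j => (2 : ℝ) ^ j / (2 ^ n) ^ j) (fun j => by positivity)
    ((2 ^ n) ^ L) (L + 1) (Nat.pow_lt_pow_right (by omega) (by omega))).trans ?_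
  have h1 : ∀ j ∈ Finset.range (L + 1), (Module.finrank ℚ K * Real.log 4) *
      ((2 ^ n : ℕ) : ℝ) ^ (j + 1) * ((2 : ℝ) ^ j / (2 ^ n) ^ j) =
      (Module.finrank ℚ K * Real.log 4) * 2 ^ n * 2 ^ j := by
    intro j _
    push_cast
    rw [pow_succ]
    field_simp
  rw [Finset.sum_congr rfl h1, ← Finset.mul_sum]
  have hgeom : ∑ i ∈ Finset.range (L + 1), (2 : ℝ) ^ i ≤ 2 * 2 ^ L := by
    rw [geom_sum_eq (by norm_num), pow_succ]; norm_num; linarith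
  have hl : 0 < Real.log 4 := Real.log_pos (by norm_num)
  calc _ ≤ (Module.finrank ℚ K * Real.log 4) * 2 ^ n * (2 * 2 ^ L) := by gcongr
    _ = _ := by ring

lemma dyadic2 (n : ℕ) (hn : 1 ≤ n) (L : ℕ) :
    ∑ p ∈ Pr K ((2 ^ n) ^ L), Real.log (Ideal.absNorm p) / (Ideal.absNorm p : ℝ) ^ 2 ≤
      2 * (Module.finrank ℚ K * Real.log 4) * 2 ^ n := by
  have hQ : 2 ≤ 2 ^ n := by simpa using Nat.pow_le_pow_right (n := 2) (by norm_num) hn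
  have hQr : (2 : ℝ) ≤ 2 ^ n := by exact_mod_cast hQ
  have hl : 0 < Real.log 4 := Real.log_pos (by norm_num)
  have h0 : ∑ p ∈ Pr K ((2 ^ n) ^ L), Real.log (Ideal.absNorm p) / (Ideal.absNorm p : ℝ) ^ 2 ≤
      ∑ p ∈ Pr K ((2 ^ n) ^ L), Real.log (Ideal.absNorm p) *
        (1 / (((2 : ℝ) ^ n) ^ (Nat.log (2 ^ n) (Ideal.absNorm p))) ^ 2) := by
    refine Finset.sum_le_sum fun p hp => ?_
    rw [mem_Pr] at hp
    have h2 := (log_spec hQ (two_le_norm hp.1 hp.2.1)).1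
    have h3 : ((2 : ℝ) ^ n) ^ (Nat.log (2 ^ n) (Ideal.absNorm p)) ≤ Ideal.absNorm p := by
      exact_mod_cast h2
    rw [div_eq_mul_one_div]
    refine mul_le_mul_of_nonneg_left ?_ (log_norm_nonneg p)
    gcongr
  refine h0.trans ((dyadic (K := K) (2 ^ n) hQ (fun j => 1 / (((2 : ℝ) ^ n) ^ j) ^ 2)
    (fun j => by positivity)
    ((2 ^ n) ^ L) (L + 1) (Nat.pow_lt_pow_right (by omega) (by omega))).trans ?_)
  have h1 : ∀ j ∈ Finset.range (L + 1), (Module.finrank ℚ K * Real.log 4) *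
      ((2 ^ n : ℕ) : ℝ) ^ (j + 1) * (1 / (((2 : ℝ) ^ n) ^ j) ^ 2) ≤
      (Module.finrank ℚ K * Real.log 4) * 2 ^ n * (1 / 2) ^ j := by
    intro j _
    push_cast
    have e : (Module.finrank ℚ K * Real.log 4) *
      (2 ^ n : ℝ) ^ (j + 1) * (1 / (((2 : ℝ) ^ n) ^ j) ^ 2) =
      (Module.finrank ℚ K * Real.log 4) * 2 ^ n * (1 / (2 ^ n : ℝ)) ^ j := by
      rw [pow_succ, one_div_pow]
      field_simp
    rw [e]
    gcongr
  refine (Finset.sum_le_sum h1).trans ?_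
  rw [← Finset.mul_sum]
  have hgeom : ∑ i ∈ Finset.range (L + 1), (1 / 2 : ℝ) ^ i ≤ 2 := sum_geometric_two_le _
  calc _ ≤ (Module.finrank ℚ K * Real.log 4) * 2 ^ n * 2 := by gcongr
    _ = _ := by ring

lemma geom_tail (x : ℝ) (hx0 : 0 ≤ x) (hx : x ≤ 1 / 2) (L : ℕ) :
    ∑ k ∈ Finset.Icc 2 L, x ^ k ≤ 2 * x ^ 2 := by
  have key : ∀ L : ℕ, ∑ k ∈ Finset.Icc 2 (L + 1), x ^ k + 2 * x ^ (L + 2) ≤ 2 * x ^ 2 := by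
    intro L
    induction L with
    | zero => simp
    | succ L ih =>
      rw [Finset.sum_Icc_succ_top (by omega)]
      have h1 : x ^ (L + 1 + 2) = x * x ^ (L + 2) := by ring
      have h2 : x ^ (L + 1 + 1) = x ^ (L + 2) := by ring
      have h3 : x * x ^ (L + 2) ≤ 1 / 2 * x ^ (L + 2) := by gcongr
      rw [h1, h2]
      linarith
  rcases L with _ | L
  · simp; positivity
  · have := key L
    have h : 0 ≤ 2 * x ^ (L + 2) := by positivity
    linarith

lemma A_upper (b : Basis ι ℤ (𝓞 K)) [Nonempty ι] :
    ∃ C : ℝ, ∀ J : ℕ, Asum K ((2 ^ Fintype.card ι) ^ J) ≤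
      Fintype.card ι * (J * Real.log 2) + C := by
  obtain ⟨c, hc⟩ := norm_upper b
  obtain ⟨C₁, hC₁, hcb⟩ := count_bounds b 0
  set n := Fintype.card ι with hn
  have hn1 : 1 ≤ n := Fintype.card_pos
  have hQ : 2 ≤ 2 ^ n := by simpa using Nat.pow_le_pow_right (n := 2) (by norm_num) hn1
  set CK : ℝ := 2 * (Module.finrank ℚ K * Real.log 4) * 2 ^ n with hCK
  refine ⟨n * (c * Real.log 2) + C₁ * CK, fun J => ?_⟩
  set M : ℝ := 2 ^ J with hM
  have hMpos : 0 < M := by positivity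
  have hMM : M ^ n = M * M ^ (n - 1) := by rw [← pow_succ']; congr 1; omega
  have hS := S_eq b (2 ^ J) ((2 ^ n) ^ (J + c)) (n * (J + c) + 1) (hc J)
    (by rw [← pow_mul]; exact Nat.pow_lt_pow_right (by norm_num) (by omega))
  -- upper bound on the left
  have hup : ∑ v ∈ bx ι 0 ((2 ^ J : ℕ) : ℤ),
      Real.log (Ideal.absNorm (Ideal.span {b.equivFun.symm v})) ≤
      M ^ n * (n * ((J + c) * Real.log 2)) := by
    have h1 : ∀ v ∈ bx ι 0 ((2 ^ J : ℕ) : ℤ),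
        Real.log (Ideal.absNorm (Ideal.span {b.equivFun.symm v})) ≤
          n * ((J + c) * Real.log 2) := by
      intro v hv
      have h2 : (Ideal.absNorm (Ideal.span {b.equivFun.symm v}) : ℝ) ≤ (2 ^ n) ^ (J + c) := by
        exact_mod_cast hc J v hv
      have h3 : Ideal.absNorm (Ideal.span {b.equivFun.symm v}) ≠ 0 := by
        rw [Ne, Ideal.absNorm_eq_zero_iff, Ideal.span_singleton_eq_bot]
        exact el_ne_zero b _ v hv
      have h4 := Real.log_le_log (by exact_mod_cast Nat.pos_of_ne_zero h3) h2
      rw [Real.log_pow, Real.log_pow] at h4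
      push_cast at h4
      linarith
    refine (Finset.sum_le_sum h1).trans (le_of_eq ?_)
    rw [Finset.sum_const, card_bx, nsmul_eq_mul, sub_zero, Int.toNat_natCast, hM]
    push_cast
    rfl
  -- lower bound on the right
  have hlo : M ^ n * Asum K ((2 ^ n) ^ J) - C₁ * M ^ (n - 1) * (CK * M) ≤
      ∑ p ∈ Pr K ((2 ^ n) ^ (J + c)), ∑ k ∈ Finset.Icc 1 (n * (J + c) + 1),
        Real.log (Ideal.absNorm p) * cnt b (p ^ k) (2 ^ J) := by
    have h1 : ∑ p ∈ Pr K ((2 ^ n) ^ J), Real.log (Ideal.absNorm p) * cnt b p (2 ^ J) ≤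
      ∑ p ∈ Pr K ((2 ^ n) ^ (J + c)), ∑ k ∈ Finset.Icc 1 (n * (J + c) + 1),
        Real.log (Ideal.absNorm p) * cnt b (p ^ k) (2 ^ J) := by
      have hnn : ∀ p : Ideal (𝓞 K), ∀ k : ℕ,
          0 ≤ Real.log (Ideal.absNorm p) * cnt b (p ^ k) (2 ^ J) := fun p k =>
        mul_nonneg (log_norm_nonneg p) (by positivity)
      refine le_trans (Finset.sum_le_sum (g := fun p => ∑ k ∈ Finset.Icc 1 (n * (J + c) + 1),
        Real.log (Ideal.absNorm p) * cnt b (p ^ k) (2 ^ J)) fun p _ => ?_)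
        (Finset.sum_le_sum_of_subset_of_nonneg
          (Pr_mono (Nat.pow_le_pow_right (by omega) (by omega)))
          fun p _ _ => Finset.sum_nonneg fun k _ => hnn p k)
      have := Finset.single_le_sum (f := fun k =>
        Real.log (Ideal.absNorm p) * cnt b (p ^ k) (2 ^ J)) (s := Finset.Icc 1 (n * (J + c) + 1))
        (fun k _ => hnn p k) (a := 1) (Finset.mem_Icc.2 ⟨le_rfl, by omega⟩)
      simpa using this
    refine le_trans ?_ h1
    have h2 : ∀ p ∈ Pr K ((2 ^ n) ^ J), M ^ n * (Real.log (Ideal.absNorm p) / Ideal.absNorm p) -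
        C₁ * M ^ (n - 1) * (Real.log (Ideal.absNorm p) *
          ((2 : ℝ) ^ (Nat.log (2 ^ n) (Ideal.absNorm p)) /
        (2 ^ n) ^ (Nat.log (2 ^ n) (Ideal.absNorm p)))) ≤
        Real.log (Ideal.absNorm p) * cnt b p (2 ^ J) := by
      intro p hp
      rw [mem_Pr] at hp
      have hN2 := two_le_norm hp.1 hp.2.1
      obtain ⟨hl1, hl2⟩ := log_spec hQ hN2
      set j := Nat.log (2 ^ n) (Ideal.absNorm p) with hj
      have hb := (hcb p J j hp.2.1 hl2).1
      have hNpos : (0 : ℝ) < Ideal.absNorm p := by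
        exact_mod_cast (by omega : 0 < Ideal.absNorm p)
      have hl1' : ((2 : ℝ) ^ n) ^ j ≤ Ideal.absNorm p := by exact_mod_cast hl1
      have h3 : M ^ n / Ideal.absNorm p - C₁ * M ^ (n - 1) * (2 ^ j / Ideal.absNorm p) ≤
          cnt b p (2 ^ J) := by
        have : (M ^ n - C₁ * 2 ^ j * M ^ (n - 1)) / Ideal.absNorm p ≤ cnt b p (2 ^ J) := by
          rw [div_le_iff₀' hNpos]; exact hb
        refine le_trans (le_of_eq ?_) this
        ring
      have h4 : C₁ * M ^ (n - 1) * (2 ^ j / Ideal.absNorm p) ≤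
          C₁ * M ^ (n - 1) * (2 ^ j / (2 ^ n) ^ j) := by gcongr
      have h5 := mul_le_mul_of_nonneg_left (by linarith : M ^ n / Ideal.absNorm p -
        C₁ * M ^ (n - 1) * (2 ^ j / (2 ^ n) ^ j) ≤ cnt b p (2 ^ J)) (log_norm_nonneg p)
      refine le_trans (le_of_eq ?_) h5
      ring
    have h3 := Finset.sum_le_sum h2
    rw [Finset.sum_sub_distrib, ← Finset.mul_sum, ← Finset.mul_sum] at h3
    have h4 := dyadic1 (K := K) n hn1 J
    rw [← hCK] at h4
    have h5 := mul_le_mul_of_nonneg_left h4 (by positivity : 0 ≤ C₁ * M ^ (n - 1))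
    rw [Asum]
    linarith
  rw [hS] at hup
  have h6 := hlo.trans hup
  have h7 : M ^ n * Asum K ((2 ^ n) ^ J) ≤
      M ^ n * (n * (J * Real.log 2) + (n * (c * Real.log 2) + C₁ * CK)) := by
    have e : C₁ * M ^ (n - 1) * (CK * M) = M ^ n * (C₁ * CK) := by rw [hMM]; ring
    rw [e] at h6
    linarith
  exact le_of_mul_le_mul_left h7 (by positivity)

lemma A_lower (b : Basis ι ℤ (𝓞 K)) [Nonempty ι] :
    ∃ C : ℝ, ∃ c : ℕ, ∀ J : ℕ, Fintype.card ι * (J * Real.log 2) - C ≤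
      Asum K ((2 ^ Fintype.card ι) ^ (J + c)) := by
  classical
  obtain ⟨c, hc⟩ := norm_upper b
  obtain ⟨C₁, hC₁, hcb⟩ := count_bounds b c
  obtain ⟨C₂, hC₂, hlow⟩ := sum_lower b
  set n := Fintype.card ι with hn
  have hn1 : 1 ≤ n := Fintype.card_pos
  have hQ : 2 ≤ 2 ^ n := by simpa using Nat.pow_le_pow_right (n := 2) (by norm_num) hn1
  set CK : ℝ := 2 * (Module.finrank ℚ K * Real.log 4) * 2 ^ n with hCK
  set C₅ : ℝ := 1 + C₁ * 2 ^ c with hC₅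
  have hC₅pos : 0 < C₅ := by positivity
  refine ⟨C₂ + C₁ * (CK * 2 ^ c) + C₅ * (2 * CK), c, fun J => ?_⟩
  set M : ℝ := 2 ^ J with hM
  have hMpos : 0 < M := by positivity
  have hMM : M ^ n = M * M ^ (n - 1) := by rw [← pow_succ']; congr 1; omega
  set L := n * (J + c) + 1 with hL
  have hS := S_eq b (2 ^ J) ((2 ^ n) ^ (J + c)) L (hc J)
    (by rw [← pow_mul]; exact Nat.pow_lt_pow_right (by norm_num) (by omega))
  have hlo := hlow J
  rw [hS] at hlo
  have hrough : ∀ I : Ideal (𝓞 K), I ≠ ⊥ → 2 ≤ Ideal.absNorm I →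
      (cnt b I (2 ^ J) : ℝ) ≤ C₅ * M ^ n * (1 / Ideal.absNorm I) := by
    intro I hI hN2
    have hNpos : (0 : ℝ) < Ideal.absNorm I := by
      exact_mod_cast (by omega : 0 < Ideal.absNorm I)
    by_cases hle : Ideal.absNorm I ≤ (2 ^ n) ^ (J + c)
    · obtain ⟨hl1, hl2⟩ := log_spec hQ hN2
      set j := Nat.log (2 ^ n) (Ideal.absNorm I) with hj
      have hjJ : j ≤ J + c := (Nat.pow_le_pow_iff_right (by omega)).1 (hl1.trans hle)
      have hb := (hcb I J j hI hl2).2 hjJ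
      have h2 : (2 : ℝ) ^ j ≤ M * 2 ^ c := by
        rw [hM, ← pow_add]; exact pow_le_pow_right₀ (by norm_num) hjJ
      have h3 : C₁ * 2 ^ j * M ^ (n - 1) ≤ C₁ * (M * 2 ^ c) * M ^ (n - 1) := by gcongr
      have h4 : (Ideal.absNorm I * cnt b I (2 ^ J) : ℝ) ≤ C₅ * M ^ n := by
        have e : C₁ * (M * 2 ^ c) * M ^ (n - 1) = C₁ * 2 ^ c * M ^ n := by rw [hMM]; ring
        rw [hC₅]
        linarith
      rw [mul_one_div, le_div_iff₀' hNpos]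
      exact h4
    · have h0 : cnt b I (2 ^ J) = 0 := by
        rw [cnt, Finset.card_eq_zero, Finset.filter_eq_empty_iff]
        intro v hv hvI
        apply hle
        refine le_trans ?_ (hc J v hv)
        have h3 : Ideal.absNorm (Ideal.span {b.equivFun.symm v}) ≠ 0 := by
          rw [Ne, Ideal.absNorm_eq_zero_iff, Ideal.span_singleton_eq_bot]
          exact el_ne_zero b _ v hv
        exact Nat.le_of_dvd (Nat.pos_of_ne_zero h3)
          (map_dvd Ideal.absNorm (Ideal.dvd_span_singleton.2 hvI))
      rw [h0, Nat.cast_zero]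
      positivity
  have hpt : ∀ p ∈ Pr K ((2 ^ n) ^ (J + c)), ∑ k ∈ Finset.Icc 1 L,
      Real.log (Ideal.absNorm p) * cnt b (p ^ k) (2 ^ J) ≤
      M ^ n * (Real.log (Ideal.absNorm p) / Ideal.absNorm p) +
        C₁ * M ^ (n - 1) * (Real.log (Ideal.absNorm p) *
          ((2 : ℝ) ^ (Nat.log (2 ^ n) (Ideal.absNorm p)) /
        (2 ^ n) ^ (Nat.log (2 ^ n) (Ideal.absNorm p)))) +
        2 * C₅ * M ^ n * (Real.log (Ideal.absNorm p) / (Ideal.absNorm p : ℝ) ^ 2) := by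
    intro p hp
    rw [mem_Pr] at hp
    have hN2 := two_le_norm hp.1 hp.2.1
    obtain ⟨hl1, hl2⟩ := log_spec hQ hN2
    set j := Nat.log (2 ^ n) (Ideal.absNorm p) with hj
    have hjJ : j ≤ J + c := (Nat.pow_le_pow_iff_right (by omega)).1 (hl1.trans hp.2.2)
    have hb := (hcb p J j hp.2.1 hl2).2 hjJ
    have hNpos : (0 : ℝ) < Ideal.absNorm p := by
      exact_mod_cast (by omega : 0 < Ideal.absNorm p)
    have hN2' : (2 : ℝ) ≤ Ideal.absNorm p := by exact_mod_cast hN2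
    have hl1' : ((2 : ℝ) ^ n) ^ j ≤ Ideal.absNorm p := by exact_mod_cast hl1
    have h3 : (cnt b p (2 ^ J) : ℝ) ≤
        M ^ n / Ideal.absNorm p + C₁ * M ^ (n - 1) * (2 ^ j / Ideal.absNorm p) := by
      have : (cnt b p (2 ^ J) : ℝ) ≤ (M ^ n + C₁ * 2 ^ j * M ^ (n - 1)) / Ideal.absNorm p := by
        rw [le_div_iff₀' hNpos]; exact hb
      refine le_trans this (le_of_eq ?_)
      ring
    have h4 : C₁ * M ^ (n - 1) * (2 ^ j / Ideal.absNorm p) ≤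
        C₁ * M ^ (n - 1) * (2 ^ j / (2 ^ n) ^ j) := by gcongr
    have h5 : ∑ k ∈ Finset.Icc 2 L, (cnt b (p ^ k) (2 ^ J) : ℝ) ≤
        C₅ * M ^ n * (2 * (1 / Ideal.absNorm p) ^ 2) := by
      have hx : (1 / Ideal.absNorm p : ℝ) ≤ 1 / 2 := by gcongr
      refine le_trans (Finset.sum_le_sum (g := fun k => C₅ * M ^ n * (1 / Ideal.absNorm p : ℝ) ^ k)
        fun k hk => ?_) ?_
      · have hk2 := (Finset.mem_Icc.1 hk).1
        have h6 := hrough (p ^ k) (pow_ne_zero k hp.2.1) (by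
          rw [map_pow]
          exact hN2.trans (Nat.le_self_pow (by omega) _))
        rw [map_pow, Nat.cast_pow] at h6
        rw [one_div_pow]
        exact h6
      · rw [← Finset.mul_sum]
        exact mul_le_mul_of_nonneg_left (geom_tail _ (by positivity) hx L) (by positivity)
    have h7 : ∑ k ∈ Finset.Icc 1 L, (cnt b (p ^ k) (2 ^ J) : ℝ) =
        cnt b p (2 ^ J) + ∑ k ∈ Finset.Icc 2 L, (cnt b (p ^ k) (2 ^ J) : ℝ) := by
      rw [← Finset.add_sum_Ioc_eq_sum_Icc (by omega : 1 ≤ L), pow_one]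
      rfl
    rw [← Finset.mul_sum, h7]
    have h8 := mul_le_mul_of_nonneg_left (by linarith : (cnt b p (2 ^ J) : ℝ) +
      ∑ k ∈ Finset.Icc 2 L, (cnt b (p ^ k) (2 ^ J) : ℝ) ≤ M ^ n / Ideal.absNorm p +
        C₁ * M ^ (n - 1) * (2 ^ j / (2 ^ n) ^ j) + C₅ * M ^ n * (2 * (1 / Ideal.absNorm p) ^ 2))
      (log_norm_nonneg p)
    refine h8.trans (le_of_eq ?_)
    ring
  have h3 := hlo.trans (Finset.sum_le_sum hpt)
  rw [Finset.sum_add_distrib, Finset.sum_add_distrib, ← Finset.mul_sum, ← Finset.mul_sum,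
    ← Finset.mul_sum] at h3
  have h4 := dyadic1 (K := K) n hn1 (J + c)
  rw [← hCK] at h4
  have h5 := mul_le_mul_of_nonneg_left h4 (by positivity : 0 ≤ C₁ * M ^ (n - 1))
  have h6 := dyadic2 (K := K) n hn1 (J + c)
  rw [← hCK] at h6
  have h7 := mul_le_mul_of_nonneg_left h6 (by positivity : 0 ≤ 2 * C₅ * M ^ n)
  have e : C₁ * M ^ (n - 1) * (CK * 2 ^ (J + c)) = M ^ n * (C₁ * (CK * 2 ^ c)) := by
    rw [hMM, pow_add, hM]; ring
  rw [e] at h5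
  have h8 : M ^ n * (n * (J * Real.log 2) - (C₂ + C₁ * (CK * 2 ^ c) + C₅ * (2 * CK))) ≤
      M ^ n * Asum K ((2 ^ n) ^ (J + c)) := by
    rw [Asum]
    linarith
  exact le_of_mul_le_mul_left h8 (by positivity)

end BertrandNF

/-- Bertrand's postulate for number fields (Hulse–Ram Murty): there is `B > 1`
such that for every `x > 1` there is a nonzero prime ideal of `𝓞 K` whose
absolute norm lies in `[x, B*x]`. -/
theorem stmt_9 (K : Type*) [Field K] [NumberField K] :
    ∃ B : ℝ, 1 < B ∧ ∀ x : ℝ, 1 < x →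
      ∃ 𝔭 : Ideal (NumberField.RingOfIntegers K), 𝔭.IsPrime ∧ 𝔭 ≠ ⊥ ∧
        x ≤ (Ideal.absNorm 𝔭 : ℝ) ∧ (Ideal.absNorm 𝔭 : ℝ) ≤ B * x := by
  classical
  let b := NumberField.RingOfIntegers.basis K
  have hcard : Fintype.card (Module.Free.ChooseBasisIndex ℤ (NumberField.RingOfIntegers K)) =
      Module.finrank ℚ K := by
    rw [← NumberField.RingOfIntegers.rank, Module.finrank_eq_card_chooseBasisIndex]
  have : Nonempty (Module.Free.ChooseBasisIndex ℤ (NumberField.RingOfIntegers K)) := by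
    rw [← Fintype.card_pos_iff, hcard]; exact Module.finrank_pos
  obtain ⟨C₃, hup⟩ := BertrandNF.A_upper b
  obtain ⟨C₆, c, hlo⟩ := BertrandNF.A_lower b
  set n := Fintype.card (Module.Free.ChooseBasisIndex ℤ (NumberField.RingOfIntegers K)) with hn
  have hn1 : 1 ≤ n := Fintype.card_pos
  have hQ : 2 ≤ 2 ^ n := by simpa using Nat.pow_le_pow_right (n := 2) (by norm_num) hn1
  have hQr : (2 : ℝ) ≤ 2 ^ n := by exact_mod_cast hQ
  have hl : 0 < Real.log 2 := Real.log_pos one_lt_two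
  have hnl : 0 < n * Real.log 2 := mul_pos (by exact_mod_cast hn1) hl
  obtain ⟨d, hd⟩ := exists_nat_gt ((C₃ + C₆) / (n * Real.log 2))
  rw [div_lt_iff₀ hnl] at hd
  refine ⟨(2 ^ n) ^ (d + c + 1), one_lt_pow₀ (by linarith) (by omega), fun x hx => ?_⟩
  obtain ⟨m, hm1, hm2⟩ := exists_nat_pow_near hx.le (by linarith : (1 : ℝ) < 2 ^ n)
  have h1 := hup (m + 1)
  have h2 := hlo (m + 1 + d)
  have h3 : BertrandNF.Asum K ((2 ^ n) ^ (m + 1)) <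
      BertrandNF.Asum K ((2 ^ n) ^ (m + 1 + d + c)) := by
    push_cast at h1 h2
    linarith
  have h4 : ∃ p ∈ BertrandNF.Pr K ((2 ^ n) ^ (m + 1 + d + c)),
      p ∉ BertrandNF.Pr K ((2 ^ n) ^ (m + 1)) := by
    by_contra hcon
    push Not at hcon
    refine absurd h3 (not_lt.2 ?_)
    exact Finset.sum_le_sum_of_subset_of_nonneg hcon fun p _ _ =>
      div_nonneg (BertrandNF.log_norm_nonneg p) (by positivity)
  obtain ⟨p, hp, hp'⟩ := h4
  rw [BertrandNF.mem_Pr] at hp hp'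
  have h5 : (2 ^ n) ^ (m + 1) < Ideal.absNorm p := by
    by_contra hcon
    exact hp' ⟨hp.1, hp.2.1, not_lt.1 hcon⟩
  refine ⟨p, hp.1, hp.2.1, ?_, ?_⟩
  · have : ((2 : ℝ) ^ n) ^ (m + 1) < Ideal.absNorm p := by exact_mod_cast h5
    linarith
  · have : (Ideal.absNorm p : ℝ) ≤ (2 ^ n) ^ (m + 1 + d + c) := by exact_mod_cast hp.2.2
    calc (Ideal.absNorm p : ℝ) ≤ (2 ^ n) ^ (m + 1 + d + c) := this
      _ = (2 ^ n) ^ (d + c + 1) * (2 ^ n) ^ m := by rw [← pow_add]; congr 1; omega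
      _ ≤ _ := by gcongr
end

section
/- Let d = 1 or d = 2. Then there exists a real number B > 1 such that for every real x > 1 there is a prime element α of ℤ[√−d] whose norm N(α) = |α|² satisfies x ≤ N(α) ≤ B·x. -/
section Helpers
open Finset

lemma abel_bd (a f : ℕ → ℝ) (m : ℕ) (hA : ∀ n, 0 ≤ ∑ k ∈ range n, a k ∧ ∑ k ∈ range n, a k ≤ 2)
    (hf : ∀ k, m ≤ k → f (k+1) ≤ f k) (hf0 : ∀ k, m ≤ k → 0 ≤ f k) (n : ℕ) (hmn : m ≤ n) :
    |∑ k ∈ Ico m n, a k * f k| ≤ 2 * f m := by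
  have key : (∑ k ∈ range n, a k) * f n - (∑ k ∈ range m, a k) * f m ≤ ∑ k ∈ Ico m n, a k * f k ∧
      ∑ k ∈ Ico m n, a k * f k ≤ (∑ k ∈ range n, a k) * f n - (∑ k ∈ range m, a k) * f m
        + 2 * (f m - f n) := by
    induction n, hmn using Nat.le_induction with
    | base => simp
    | succ n hn ih =>
      rw [Finset.sum_Ico_succ_top hn]
      have h1 := hA (n+1)
      have h2 := hf n hn
      have h3 : a n * f n = (∑ k ∈ range (n+1), a k) * f n - (∑ k ∈ range n, a k) * f n := by
        rw [Finset.sum_range_succ]; ring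
      rw [h3]
      constructor <;> nlinarith [h1.1, h1.2, h2, ih.1, ih.2]
  have h1 := hA n
  have h2 := hA m
  have h3 := hf0 n hmn
  have h4 := hf0 m le_rfl
  rw [abs_le]
  constructor <;> nlinarith [h1.1, h1.2, h2.1, h2.2, key.1, key.2]

lemma sum_conv (χ g : ℕ → ℝ) (hmul : ∀ m n, χ (m * n) = χ m * χ n)
   (hg : ∀ m n, g (m * n) = g m * g n) (N : ℕ) :
    ∑ n ∈ Ioc 0 N, χ n * g n * Real.log n =
      ∑ m ∈ Ioc 0 N, χ m * g m * ArithmeticFunction.vonMangoldt m *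
        ∑ k ∈ Ioc 0 (N / m), χ k * g k := by
  let F : ArithmeticFunction ℝ := ⟨fun m => if m = 0 then 0 else
    χ m * g m * ArithmeticFunction.vonMangoldt m, by simp⟩
  let G : ArithmeticFunction ℝ := ⟨fun m => if m = 0 then 0 else χ m * g m, by simp⟩
  have h := ArithmeticFunction.sum_Ioc_mul_eq_sum_sum F G N
  have hF : ∀ m, 0 < m → F m = χ m * g m * ArithmeticFunction.vonMangoldt m := fun m hm => by
    simp [F, hm.ne']
  have hG : ∀ m, 0 < m → G m = χ m * g m := fun m hm => by simp [G, hm.ne']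
  have hl : ∀ n ∈ Ioc 0 N, (F * G) n = χ n * g n * Real.log n := by
    intro n hn
    rw [ArithmeticFunction.mul_apply, ← ArithmeticFunction.vonMangoldt_sum,
      Nat.sum_divisorsAntidiagonal (fun i j => F i * G j), Finset.mul_sum]
    refine Finset.sum_congr rfl fun i hi => ?_
    have hi' := Nat.dvd_of_mem_divisors hi
    obtain ⟨j, rfl⟩ := hi'
    have hp : 0 < i * j := (Finset.mem_Ioc.1 hn).1
    have hi0 : 0 < i := Nat.pos_of_mul_pos_right hp
    have hj0 : 0 < j := Nat.pos_of_mul_pos_left hp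
    rw [Nat.mul_div_cancel_left _ hi0, hF i hi0, hG j hj0, hmul, hg]
    ring
  rw [Finset.sum_congr rfl hl] at h
  rw [h]
  refine Finset.sum_congr rfl fun m hm => ?_
  rw [hF m (Finset.mem_Ioc.1 hm).1]
  congr 1
  exact Finset.sum_congr rfl fun k hk => hG k (Finset.mem_Ioc.1 hk).1

lemma psi_nat (N : ℕ) : ∑ m ∈ Ioc 0 N, ArithmeticFunction.vonMangoldt m ≤ (Real.log 4 + 4) * N := by
  have := Chebyshev.psi_le_const_mul_self (x := (N:ℝ)) (by positivity)
  simpa [Chebyshev.psi] using this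

lemma log_fact (N : ℕ) (hN : 0 < N) : N * Real.log N - N ≤ ∑ n ∈ Ioc 0 N, Real.log n ∧
    ∑ n ∈ Ioc 0 N, Real.log n ≤ N * Real.log N := by
  constructor
  · induction N, hN using Nat.le_induction with
    | base => simp
    | succ n hn ih =>
      rw [← Finset.insert_Ioc_right_eq_Ioc_add_one (by omega), Finset.sum_insert (by simp)]
      have hn' : (0:ℝ) < n := by exact_mod_cast hn
      have : Real.log (n+1) ≤ Real.log n + 1 / n := by
        have h := Real.log_le_sub_one_of_pos (x := ((n:ℝ)+1)/n) (by positivity)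
        rw [Real.log_div (by positivity) (by positivity)] at h
        have : ((n:ℝ)+1)/n - 1 = 1 / n := by field_simp; ring
        linarith
      have h2 : n * Real.log (n+1) ≤ n * Real.log n + 1 := by
        have := mul_le_mul_of_nonneg_left this hn'.le
        have h3 : n * (Real.log n + 1 / n) = n * Real.log n + 1 := by field_simp
        linarith
      push_cast
      linarith
  · calc _ ≤ ∑ n ∈ Ioc 0 N, Real.log N := by
          refine Finset.sum_le_sum fun n hn => ?_
          have := Finset.mem_Ioc.1 hn
          exact Real.log_le_log (by exact_mod_cast this.1) (by exact_mod_cast this.2)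
      _ = _ := by simp

lemma mertens (N : ℕ) (hN : 0 < N) :
    Real.log N - 1 ≤ ∑ m ∈ Ioc 0 N, ArithmeticFunction.vonMangoldt m / m ∧
    ∑ m ∈ Ioc 0 N, ArithmeticFunction.vonMangoldt m / m ≤ Real.log N + (Real.log 4 + 4) := by
  have h := sum_conv (fun _ => 1) (fun _ => 1) (by simp) (by simp) N
  simp only [one_mul, mul_one, Finset.sum_const, Nat.card_Ioc, tsub_zero, nsmul_eq_mul] at h
  have hl := log_fact N hN
  have hp := psi_nat N
  have hN' : (0:ℝ) < N := by exact_mod_cast hN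
  have h1 : ∑ m ∈ Ioc 0 N, ArithmeticFunction.vonMangoldt m * ((N / m : ℕ) : ℝ) ≤
      N * ∑ m ∈ Ioc 0 N, ArithmeticFunction.vonMangoldt m / m := by
    rw [Finset.mul_sum]
    refine Finset.sum_le_sum fun m hm => ?_
    have := mul_le_mul_of_nonneg_left (Nat.cast_div_le (α := ℝ) (m := N) (n := m))
      (ArithmeticFunction.vonMangoldt_nonneg (n := m))
    calc _ ≤ _ := this
      _ = _ := by ring
  have h2 : N * ∑ m ∈ Ioc 0 N, ArithmeticFunction.vonMangoldt m / m ≤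
    ∑ m ∈ Ioc 0 N, ArithmeticFunction.vonMangoldt m * ((N / m : ℕ) : ℝ) +
      ∑ m ∈ Ioc 0 N, ArithmeticFunction.vonMangoldt m := by
    rw [Finset.mul_sum, ← Finset.sum_add_distrib]
    refine Finset.sum_le_sum fun m hm => ?_
    have hm0 := (Finset.mem_Ioc.1 hm).1
    have h3 : (N:ℝ) / m ≤ ((N / m : ℕ) : ℝ) + 1 := by
      rw [div_le_iff₀ (by exact_mod_cast hm0)]
      have : N ≤ (N / m + 1) * m := by
        rw [mul_comm]; exact (Nat.lt_mul_div_succ N hm0).le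
      exact_mod_cast this
    have := mul_le_mul_of_nonneg_left h3 (ArithmeticFunction.vonMangoldt_nonneg (n := m))
    calc _ = ArithmeticFunction.vonMangoldt m * ((N:ℝ) / m) := by ring
      _ ≤ _ := this
      _ = _ := by ring
  constructor
  · have : N * (Real.log N - 1) ≤ N * ∑ m ∈ Ioc 0 N, ArithmeticFunction.vonMangoldt m / m := by
      linarith [hl.1]
    exact le_of_mul_le_mul_left this hN'
  · have : N * ∑ m ∈ Ioc 0 N, ArithmeticFunction.vonMangoldt m / m ≤
      N * (Real.log N + (Real.log 4 + 4)) := by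
      linarith [hl.2]
    exact le_of_mul_le_mul_left this hN'

lemma chi_bd (χ : ℕ → ℝ) (hmul : ∀ m n, χ (m * n) = χ m * χ n) (h1 : ∀ n, |χ n| ≤ 1)
    (hA : ∀ n, 0 ≤ ∑ k ∈ range n, χ k ∧ ∑ k ∈ range n, χ k ≤ 2)
    (hT : 1 / 2 < ∑ k ∈ Ico 1 4, χ k * (k:ℝ)⁻¹) :
    ∃ C : ℝ, ∀ N : ℕ, 3 ≤ N → |∑ m ∈ Ioc 0 N, χ m * ArithmeticFunction.vonMangoldt m / m| ≤ C := by
  set T : ℕ → ℝ := fun n => ∑ k ∈ Ico 1 n, χ k * (k:ℝ)⁻¹ with hTdef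
  have hIoc : ∀ n, Ioc 0 n = Ico 1 (n+1) := fun n => by ext; simp; omega
  have hTd : ∀ m n, 1 ≤ m → m ≤ n → |T n - T m| ≤ 2 * (m:ℝ)⁻¹ := by
    intro m n hm hmn
    have := abel_bd χ (fun k => (k:ℝ)⁻¹) m hA (fun k hk => by
      have : (0:ℝ) < k := by exact_mod_cast (by omega : 0 < k)
      push_cast
      gcongr; linarith) (fun k hk => by positivity) n hmn
    have e : T n - T m = ∑ k ∈ Ico m n, χ k * (k:ℝ)⁻¹ := by
      simp only [hTdef]
      rw [← Finset.sum_Ico_consecutive _ hm hmn, add_sub_cancel_left]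
    rw [e]; exact this
  have hTlow : ∀ n, 4 ≤ n → T 4 - 1 / 2 ≤ T n := by
    intro n hn
    have := hTd 4 n (by norm_num) hn
    have := (abs_le.1 this).1
    norm_num at this ⊢
    linarith
  have hlog : ∀ N, 3 ≤ N → |∑ n ∈ Ioc 0 N, χ n * (n:ℝ)⁻¹ * Real.log n| ≤
      |∑ n ∈ Ico 1 3, χ n * (n:ℝ)⁻¹ * Real.log n| + 2 * (Real.log 3 / 3) := by
    intro N hN
    rw [hIoc, ← Finset.sum_Ico_consecutive _ (by norm_num : 1 ≤ 3) (by omega : 3 ≤ N+1)]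
    refine (abs_add_le _ _).trans ?_
    gcongr
    have he : Real.exp 1 ≤ 3 := by linarith [Real.exp_one_lt_d9]
    have := abel_bd χ (fun k => Real.log k / k) 3 hA (fun k hk => by
      have : (3:ℝ) ≤ k := by exact_mod_cast hk
      refine Real.log_div_self_antitoneOn (Set.mem_Ici.2 (by linarith)) (Set.mem_Ici.2 ?_) ?_
      · push_cast; linarith
      · push_cast; linarith) (fun k hk => by positivity) (N+1) (by omega)
    convert! this using 3
    ring
  set C1 := |∑ n ∈ Ico 1 3, χ n * (n:ℝ)⁻¹ * Real.log n| + 2 * (Real.log 3 / 3)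
  refine ⟨(C1 + 2 * (Real.log 4 + 4)) / (T 4 - 1/2), fun N hN => ?_⟩
  have hδ : 0 < T 4 - 1/2 := by linarith
  have hN' : (0:ℝ) < N := by exact_mod_cast (by omega : 0 < N)
  rw [le_div_iff₀ hδ]
  set M := ∑ m ∈ Ioc 0 N, χ m * ArithmeticFunction.vonMangoldt m / m with hM
  have hc := sum_conv χ (fun k => (k:ℝ)⁻¹) hmul (fun m n => by push_cast; rw [mul_inv]) N
  have herr : |∑ n ∈ Ioc 0 N, χ n * (n:ℝ)⁻¹ * Real.log n - M * T (N+1)| ≤ 2 * (Real.log 4 + 4) := by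
    rw [hc, hM, Finset.sum_mul, ← Finset.sum_sub_distrib]
    refine (Finset.abs_sum_le_sum_abs _ _).trans ?_
    have : ∑ m ∈ Ioc 0 N, ArithmeticFunction.vonMangoldt m * (2 / N) ≤ 2 * (Real.log 4 + 4) := by
      rw [← Finset.sum_mul]
      calc _ ≤ (Real.log 4 + 4) * N * (2 / N) := by gcongr; exact psi_nat N
        _ = _ := by field_simp
    refine le_trans (Finset.sum_le_sum fun m hm => ?_) this
    have hm0 := (Finset.mem_Ioc.1 hm).1
    have hm0' : (0:ℝ) < m := by exact_mod_cast hm0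
    rw [hIoc]
    have e : χ m * (m:ℝ)⁻¹ * ArithmeticFunction.vonMangoldt m * ∑ k ∈ Ico 1 (N / m + 1), χ k * (k:ℝ)⁻¹
       - χ m * ArithmeticFunction.vonMangoldt m / m * T (N+1) =
       χ m * (ArithmeticFunction.vonMangoldt m * ((m:ℝ)⁻¹ * (T (N/m+1) - T (N+1)))) := by
      simp only [hTdef]; ring
    rw [e, abs_mul, abs_mul, abs_mul, abs_of_nonneg (ArithmeticFunction.vonMangoldt_nonneg (n := m)),
      abs_of_pos (inv_pos.2 hm0'), abs_sub_comm]
    have h3 := hTd (N/m+1) (N+1) (Nat.le_add_left 1 _)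
      (Nat.add_le_add_right (Nat.div_le_self N m) 1)
    have h4 : 2 * (((N/m+1 : ℕ):ℝ))⁻¹ ≤ 2 * (m / N) := by
      gcongr
      rw [inv_le_comm₀ (by positivity) (by positivity), inv_div, div_le_iff₀ hm0']
      have : N ≤ (N / m + 1) * m := by
        rw [mul_comm]; exact (Nat.lt_mul_div_succ N hm0).le
      exact_mod_cast this
    calc _ ≤ 1 * (ArithmeticFunction.vonMangoldt m * ((m:ℝ)⁻¹ * (2 * (m / N)))) := by
          have := ArithmeticFunction.vonMangoldt_nonneg (n := m)
          gcongr
          · exact h1 m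
          · exact h3.trans h4
      _ = _ := by field_simp
  have h5 := hlog N hN
  have h6 : |M * T (N+1)| ≤ C1 + 2 * (Real.log 4 + 4) := by
    have := abs_sub_comm (∑ n ∈ Ioc 0 N, χ n * (n:ℝ)⁻¹ * Real.log n) (M * T (N+1))
    have h7 := abs_add_le (M * T (N+1) - ∑ n ∈ Ioc 0 N, χ n * (n:ℝ)⁻¹ * Real.log n)
      (∑ n ∈ Ioc 0 N, χ n * (n:ℝ)⁻¹ * Real.log n)
    rw [sub_add_cancel] at h7
    linarith
  have h8 := hTlow (N+1) (by omega)
  rw [abs_mul, abs_of_pos (by linarith : 0 < T (N+1))] at h6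
  calc _ ≤ |M| * T (N+1) := by gcongr
    _ ≤ _ := h6

lemma exists_prime_chi (χ : ℕ → ℝ) (hmul : ∀ m n, χ (m * n) = χ m * χ n) (h1 : ∀ n, |χ n| ≤ 1)
    (hA : ∀ n, 0 ≤ ∑ k ∈ range n, χ k ∧ ∑ k ∈ range n, χ k ≤ 2)
    (hT : 1 / 2 < ∑ k ∈ Ico 1 4, χ k * (k:ℝ)⁻¹) :
    ∃ K : ℕ, ∀ N : ℕ, 3 ≤ N → ∃ p : ℕ, p.Prime ∧ N < p ∧ p ≤ K * N ∧ χ p ≠ -1 := by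
  obtain ⟨C, hC⟩ := chi_bd χ hmul h1 hA hT
  have hs := ArithmeticFunction.vonMangoldt.summable_residueClass_non_primes_div (q := 1) 0
  set s : ℕ → ℝ := fun n : ℕ ↦
    (if n.Prime then 0 else ArithmeticFunction.vonMangoldt.residueClass (0 : ZMod 1) n) / n with hsdef
  have hs0 : ∀ n, 0 ≤ s n := fun n => by
    simp only [hsdef]
    have := ArithmeticFunction.vonMangoldt.residueClass_nonneg (0 : ZMod 1) n
    positivity
  have hres : ∀ n, ArithmeticFunction.vonMangoldt.residueClass (0 : ZMod 1) n =
      ArithmeticFunction.vonMangoldt n := fun n => by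
    rw [ArithmeticFunction.vonMangoldt.residueClass, Set.indicator_of_mem]
    exact Subsingleton.elim _ _
  obtain ⟨K, hK⟩ := exists_nat_gt (Real.exp (1 + (Real.log 4 + 4) + 2 * C + 2 * ∑' n, s n))
  have hK0 : (0:ℝ) < K := (Real.exp_pos _).trans hK
  refine ⟨K, fun N hN => ?_⟩
  by_contra! hcon
  have hKl := (Real.lt_log_iff_exp_lt hK0).2 hK
  have hK1 : 1 ≤ K := by exact_mod_cast hK0
  have hNK : N ≤ K * N := Nat.le_mul_of_pos_left N hK1
  have hN' : (0:ℝ) < N := by exact_mod_cast (by omega : 0 < N)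
  have e1 := (mertens N (by omega)).2
  have e2 := (mertens (K*N) (by omega)).1
  have e3 := (abs_le.1 (hC N hN)).2
  have e4 := (abs_le.1 (hC (K*N) (by omega))).1
  rw [← Finset.sum_Ioc_consecutive _ (Nat.zero_le N) hNK] at e2 e4
  push_cast at e2
  rw [Real.log_mul hK0.ne' hN'.ne'] at e2
  have hfin : ∑ m ∈ Ioc N (K*N), ArithmeticFunction.vonMangoldt m / m +
      ∑ m ∈ Ioc N (K*N), χ m * ArithmeticFunction.vonMangoldt m / m ≤ 2 * ∑' n, s n := by
    rw [← Finset.sum_add_distrib]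
    calc _ ≤ ∑ m ∈ Ioc N (K*N), 2 * s m := by
          refine Finset.sum_le_sum fun m hm => ?_
          have hm' := Finset.mem_Ioc.1 hm
          have hL := ArithmeticFunction.vonMangoldt_nonneg (n := m)
          by_cases hp : m.Prime
          · rw [hcon m hp hm'.1 hm'.2]
            have := hs0 m
            have e : ArithmeticFunction.vonMangoldt m / (m:ℝ) +
              -1 * ArithmeticFunction.vonMangoldt m / m = 0 := by ring
            linarith
          · have : s m = ArithmeticFunction.vonMangoldt m / m := by
              simp only [hsdef, if_neg hp, hres]
            rw [this]
            have hd : 0 ≤ ArithmeticFunction.vonMangoldt m / (m:ℝ) := by positivity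
            have := mul_le_mul_of_nonneg_right (abs_le.1 (h1 m)).2 hd
            rw [mul_div_assoc]
            linarith
      _ = 2 * ∑ m ∈ Ioc N (K*N), s m := by rw [Finset.mul_sum]
      _ ≤ _ := by
          gcongr
          exact hs.sum_le_tsum _ (fun i _ => hs0 i)
  linarith

lemma prime_of_norm (d : ℕ) (p : ℕ) (hp : p.Prime) (a b : ℤ) (h : (p:ℤ) = a^2 + d * b^2) :
    Prime (⟨a, b⟩ : Zsqrtd (-(d:ℤ))) := by
  have : Fact p.Prime := ⟨hp⟩
  have hpI : Prime (p:ℤ) := Nat.prime_iff_prime_int.1 hp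
  have hb : ((b:ℤ) : ZMod p) ≠ 0 := by
    intro hb
    rw [ZMod.intCast_zmod_eq_zero_iff_dvd] at hb
    have h1 : (p:ℤ) ∣ a^2 := by
      have : a^2 = p - d * b * b := by rw [h]; ring
      rw [this]
      exact dvd_sub dvd_rfl (hb.mul_left _)
    have ha := hpI.dvd_of_dvd_pow h1
    obtain ⟨u, rfl⟩ := ha
    obtain ⟨v, rfl⟩ := hb
    have : (p:ℤ) * (p * (u^2 + d * v^2)) = p * 1 := by linarith
    have := mul_left_cancel₀ hpI.ne_zero this
    exact hpI.not_isUnit (IsUnit.of_mul_eq_one _ this)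
  have hrel : (a : ZMod p)^2 + d * (b : ZMod p)^2 = 0 := by
    have := congrArg (Int.cast : ℤ → ZMod p) h
    push_cast at this
    rw [← this]; simp
  let t : ZMod p := - a / b
  have ht : t * t = ((-(d:ℤ) : ℤ) : ZMod p) := by
    simp only [t]; push_cast; field_simp
    linear_combination hrel
  let φ := Zsqrtd.lift (R := ZMod p) ⟨t, ht⟩
  have hker : ∀ z : Zsqrtd (-(d:ℤ)), φ z = 0 ↔ (⟨a, b⟩ : Zsqrtd (-(d:ℤ))) ∣ z := by
    have h0 : φ ⟨a, b⟩ = 0 := by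
      simp only [φ, Zsqrtd.lift_apply_apply, t]; field_simp; ring
    intro z
    constructor
    · intro hz
      have hz' : (z.re : ZMod p) * b - z.im * a = 0 := by
        simp only [φ, Zsqrtd.lift_apply_apply, t] at hz
        field_simp at hz
        linear_combination hz
      have hz1 : (p:ℤ) ∣ z.im * a - z.re * b := by
        rw [← ZMod.intCast_zmod_eq_zero_iff_dvd]; push_cast
        linear_combination -hz'
      have hz2 : (p:ℤ) ∣ z.re * a + d * z.im * b := by
        rw [← ZMod.intCast_zmod_eq_zero_iff_dvd]; push_cast
        refine mul_right_cancel₀ hb ?_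
        linear_combination (a : ZMod p) * hz' + z.im * hrel
      obtain ⟨v, hv⟩ := hz1
      obtain ⟨u, hu⟩ := hz2
      refine ⟨⟨u, v⟩, ?_⟩
      have hp0 := hpI.ne_zero
      ext
      · simp only [Zsqrtd.re_mul]
        apply mul_left_cancel₀ hp0
        linear_combination a * hu - d * b * hv + z.re * h
      · simp only [Zsqrtd.im_mul]
        apply mul_left_cancel₀ hp0
        linear_combination a * hv + b * hu + z.im * h
    · rintro ⟨w, rfl⟩
      rw [map_mul, h0, zero_mul]
  refine ⟨?_, ?_, ?_⟩
  · intro h0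
    have : b = 0 := congrArg Zsqrtd.im h0
    simp [this] at hb
  · intro hu
    have := (hker 1).2 hu.dvd
    simp at this
  · intro x y hxy
    rw [← hker, map_mul, mul_eq_zero, hker, hker] at hxy
    exact hxy

lemma closure_eq (d : ℕ) (h : ((Real.sqrt d : ℂ) * Complex.I) * ((Real.sqrt d : ℂ) * Complex.I) = ((-(d:ℤ) : ℤ) : ℂ)) :
    Subring.closure {((Real.sqrt d : ℂ) * Complex.I)} =
      (Zsqrtd.lift (R := ℂ) ⟨_, h⟩).range := by
  apply le_antisymm
  · rw [Subring.closure_le]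
    rintro _ rfl
    exact ⟨Zsqrtd.sqrtd, by simp⟩
  · rintro _ ⟨z, rfl⟩
    rw [Zsqrtd.lift_apply_apply]
    exact add_mem (intCast_mem _ _) (mul_mem (intCast_mem _ _) (Subring.subset_closure rfl))

lemma exists_alpha (d : ℕ) (hd : 0 < d) (p : ℕ) (hp : p.Prime) (a b : ℤ) (h : (p:ℤ) = a^2 + d * b^2) :
    ∃ α : ↥(Subring.closure {((Real.sqrt d : ℂ) * Complex.I)}), Prime α ∧
        Complex.normSq (α : ℂ) = p := by
  have hsq : Real.sqrt d * Real.sqrt d = d := Real.mul_self_sqrt (by positivity)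
  have hr : ((Real.sqrt d : ℂ) * Complex.I) * ((Real.sqrt d : ℂ) * Complex.I) = ((-(d:ℤ) : ℤ) : ℂ) := by
    have : ((Real.sqrt d : ℝ) : ℂ) * ((Real.sqrt d : ℝ) : ℂ) = d := by exact_mod_cast hsq
    push_cast
    linear_combination Complex.I * Complex.I * this + d * Complex.I_mul_I
  rw [closure_eq d hr]
  set f := Zsqrtd.lift (R := ℂ) ⟨_, hr⟩ with hf
  have hinj : Function.Injective f := Zsqrtd.lift_injective _ (fun n hn => by nlinarith [mul_self_nonneg n])
  let e : Zsqrtd (-(d:ℤ)) ≃+* f.range := RingEquiv.ofBijective f.rangeRestrict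
    ⟨fun x y hxy => hinj (congrArg Subtype.val hxy), f.rangeRestrict_surjective⟩
  refine ⟨e ⟨a, b⟩, (MulEquiv.prime_iff e.toMulEquiv).2 (prime_of_norm d p hp a b h), ?_⟩
  have : ((e ⟨a, b⟩ : f.range) : ℂ) = (a : ℂ) + b * ((Real.sqrt d : ℂ) * Complex.I) := by
    change f ⟨a, b⟩ = _
    rw [hf, Zsqrtd.lift_apply_apply]
  rw [this, Complex.normSq_apply]
  have hre : ((a : ℂ) + b * ((Real.sqrt d : ℂ) * Complex.I)).re = a := by simp
  have him : ((a : ℂ) + b * ((Real.sqrt d : ℂ) * Complex.I)).im = b * Real.sqrt d := by simp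
  rw [hre, him]
  have h' : (p:ℝ) = a^2 + d * b^2 := by exact_mod_cast h
  rw [h']; linear_combination (b:ℝ)^2 * hsq

lemma two_sq (p : ℕ) (hp : p.Prime) (hmod : p % 8 = 1 ∨ p % 8 = 3) :
    ∃ a b : ℤ, (p:ℤ) = a^2 + 2 * b^2 := by
  have : Fact p.Prime := ⟨hp⟩
  have hp2 : p ≠ 2 := by rintro rfl; omega
  obtain ⟨t, ht⟩ := (ZMod.exists_sq_eq_neg_two_iff hp2).2 hmod
  set k := Nat.sqrt p with hk
  have hk1 : k * k ≤ p := Nat.sqrt_le p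
  have hk2 : p < (k+1) * (k+1) := Nat.lt_succ_sqrt p
  obtain ⟨u, hu, v, hv, huv, he⟩ := Finset.exists_ne_map_eq_of_card_lt_of_maps_to
    (s := Finset.range (k+1) ×ˢ Finset.range (k+1)) (t := (Finset.univ : Finset (ZMod p)))
    (f := fun x => (x.1 : ZMod p) - t * x.2) (by simp [ZMod.card]; exact hk2) (by simp)
  simp only [Finset.mem_product, Finset.mem_range] at hu hv
  set x : ℤ := (u.1 : ℤ) - v.1 with hx
  set y : ℤ := (u.2 : ℤ) - v.2 with hy
  have hkp : (k:ℤ)^2 < p := by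
    have : k * k ≠ p := by
      intro h
      have hk' : k ≠ 1 := by rintro h1; rw [h1] at h; exact hp.one_lt.ne h
      exact Nat.not_prime_mul hk' hk' (h ▸ hp)
    have : k * k < p := lt_of_le_of_ne hk1 this
    rw [sq]; exact_mod_cast this
  have hx2 : x^2 ≤ (k:ℤ)^2 := sq_le_sq' (by omega) (by omega)
  have hy2 : y^2 ≤ (k:ℤ)^2 := sq_le_sq' (by omega) (by omega)
  have hdvd : (p:ℤ) ∣ x^2 + 2 * y^2 := by
    rw [← ZMod.intCast_zmod_eq_zero_iff_dvd]
    have h1 : (x : ZMod p) = t * y := by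
      simp only [hx, hy]; push_cast; linear_combination he
    push_cast; rw [h1]; linear_combination -(y : ZMod p)^2 * ht
  have hpos : 0 < x^2 + 2 * y^2 := by
    by_contra hn
    have hx0 : x = 0 := by nlinarith [sq_nonneg x, sq_nonneg y]
    have hy0 : y = 0 := by nlinarith [sq_nonneg x, sq_nonneg y]
    exact huv (Prod.ext (by omega) (by omega))
  obtain ⟨c, hc⟩ := hdvd
  have hp0 : (0:ℤ) < p := by exact_mod_cast hp.pos
  have hc0 : 0 < c := by
    by_contra hn; nlinarith
  have hc3 : c < 3 := by
    by_contra hn; nlinarith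
  have : c = 1 ∨ c = 2 := by omega
  rcases this with rfl | rfl
  · exact ⟨x, y, by linarith⟩
  · have hev : Even (x^2) := ⟨p - y^2, by linarith⟩
    have hev' : Even x := by simpa [Int.even_pow] using hev
    obtain ⟨z, hz⟩ := hev'
    refine ⟨y, z, ?_⟩
    rw [hz] at hc
    linarith

lemma chi4_sum (n : ℕ) : ∑ k ∈ range n, ((ZMod.χ₄ (k : ZMod 4) : ℤ) : ℝ) =
    if n % 4 = 2 ∨ n % 4 = 3 then 1 else 0 := by
  induction n with
  | zero => simp
  | succ n ih =>
    rw [Finset.sum_range_succ, ih, ZMod.χ₄_nat_eq_if_mod_four]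
    have : n % 4 = 0 ∨ n % 4 = 1 ∨ n % 4 = 2 ∨ n % 4 = 3 := by omega
    rcases this with h | h | h | h <;>
      simp [h, Nat.add_mod, (by omega : n % 2 = n % 4 % 2)]

lemma chi8_sum (n : ℕ) : ∑ k ∈ range n, ((ZMod.χ₈' (k : ZMod 8) : ℤ) : ℝ) =
    if n % 8 < 2 then 0 else if n % 8 < 4 then 1 else if n % 8 < 6 then 2 else 1 := by
  induction n with
  | zero => simp
  | succ n ih =>
    rw [Finset.sum_range_succ, ih, ZMod.χ₈'_nat_eq_if_mod_eight]
    have : n % 8 = 0 ∨ n % 8 = 1 ∨ n % 8 = 2 ∨ n % 8 = 3 ∨ n % 8 = 4 ∨ n % 8 = 5 ∨ n % 8 = 6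
      ∨ n % 8 = 7 := by omega
    rcases this with h | h | h | h | h | h | h | h <;>
      simp [h, Nat.add_mod, (by omega : n % 2 = n % 8 % 2)] <;> norm_num

lemma exists_norm_one : ∃ K : ℕ, ∀ N : ℕ, 3 ≤ N → ∃ p : ℕ, p.Prime ∧ N < p ∧ p ≤ K * N ∧
    ∃ a b : ℤ, (p:ℤ) = a^2 + (1:ℕ) * b^2 := by
  obtain ⟨K, hK⟩ := exists_prime_chi (fun n => ((ZMod.χ₄ (n : ZMod 4) : ℤ) : ℝ))
    (fun m n => by rw [Nat.cast_mul, map_mul, Int.cast_mul]) (fun n => by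
      simp only [ZMod.χ₄_nat_eq_if_mod_four]; split_ifs <;> simp)
    (fun n => by rw [chi4_sum]; split_ifs <;> norm_num)
    (by
      simp only [ZMod.χ₄_nat_eq_if_mod_four]
      norm_num [Finset.sum_Ico_succ_top])
  refine ⟨K, fun N hN => ?_⟩
  obtain ⟨p, hp, h1, h2, h3⟩ := hK N hN
  refine ⟨p, hp, h1, h2, ?_⟩
  have : Fact p.Prime := ⟨hp⟩
  obtain ⟨a, b, hab⟩ := Nat.Prime.sq_add_sq (p := p) (fun h => h3 (by
    rw [ZMod.χ₄_nat_three_mod_four h]; simp))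
  exact ⟨a, b, by rw [← hab]; push_cast; ring⟩

lemma exists_norm_two : ∃ K : ℕ, ∀ N : ℕ, 3 ≤ N → ∃ p : ℕ, p.Prime ∧ N < p ∧ p ≤ K * N ∧
    ∃ a b : ℤ, (p:ℤ) = a^2 + (2:ℕ) * b^2 := by
  obtain ⟨K, hK⟩ := exists_prime_chi (fun n => ((ZMod.χ₈' (n : ZMod 8) : ℤ) : ℝ))
    (fun m n => by rw [Nat.cast_mul, map_mul, Int.cast_mul]) (fun n => by
      simp only [ZMod.χ₈'_nat_eq_if_mod_eight]; split_ifs <;> simp)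
    (fun n => by rw [chi8_sum]; split_ifs <;> norm_num)
    (by
      simp only [ZMod.χ₈'_nat_eq_if_mod_eight]
      norm_num [Finset.sum_Ico_succ_top])
  refine ⟨K, fun N hN => ?_⟩
  obtain ⟨p, hp, h1, h2, h3⟩ := hK N hN
  refine ⟨p, hp, h1, h2, ?_⟩
  have hodd : p % 2 = 1 := hp.eq_two_or_odd.resolve_left (by omega)
  refine two_sq p hp ?_
  by_contra hn
  apply h3
  simp only [ZMod.χ₈'_nat_eq_if_mod_eight]
  rw [if_neg (by omega), if_neg hn]; simp

end Helpers

/-- For `d = 1` or `d = 2`, there is `B > 1` such that for every real `x > 1`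
there is a prime element `α` of `ℤ[√-d]` (realized as the subring of `ℂ`
generated by `√d * I`) with norm `N(α) = |α|² ∈ [x, B*x]`. -/
theorem stmt_17 (d : ℕ) (hd : d = 1 ∨ d = 2) :
    ∃ B : ℝ, 1 < B ∧ ∀ x : ℝ, 1 < x →
      ∃ α : ↥(Subring.closure {((Real.sqrt d : ℂ) * Complex.I)}), Prime α ∧
        x ≤ Complex.normSq (α : ℂ) ∧ Complex.normSq (α : ℂ) ≤ B * x := by
  obtain ⟨K, hK⟩ : ∃ K : ℕ, ∀ N : ℕ, 3 ≤ N → ∃ p : ℕ, p.Prime ∧ N < p ∧ p ≤ K * N ∧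
      ∃ a b : ℤ, (p:ℤ) = a^2 + (d:ℕ) * b^2 := by
    rcases hd with rfl | rfl
    · exact exists_norm_one
    · exact exists_norm_two
  refine ⟨4 * K + 2, by have : (0:ℝ) ≤ K := by positivity
                        linarith, fun x hx => ?_⟩
  obtain ⟨p, hp, h1, h2, a, b, h⟩ := hK (⌈x⌉₊ + 2) (by
    have : 0 < ⌈x⌉₊ := Nat.ceil_pos.2 (by linarith)
    omega)
  obtain ⟨α, hα, hn⟩ := exists_alpha d (by omega) p hp a b h
  refine ⟨α, hα, ?_, ?_⟩
  · rw [hn]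
    have h3 := Nat.le_ceil x
    have h4 : ((⌈x⌉₊ + 2 : ℕ) : ℝ) < p := by exact_mod_cast h1
    push_cast at h4
    linarith
  · rw [hn]
    have h3 := Nat.ceil_lt_add_one (by linarith : 0 ≤ x)
    have h4 : (p : ℝ) ≤ ((K * (⌈x⌉₊ + 2) : ℕ) : ℝ) := by exact_mod_cast h2
    push_cast at h4
    have h5 : (0:ℝ) ≤ K := by positivity
    nlinarith [mul_nonneg h5 (by linarith : 0 ≤ (4 * x - (⌈x⌉₊ + 2 : ℝ)))]
end
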